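/- arXiv:2210.06214 — 2 statements merged into one kernel-verified Lean document; each statement's English description precedes it below -/
import Mathlib

section
/- For every positive integer n, there exists an RDSQS(7·4^n), i.e., a Steiner quadruple system SQS(7·4^n) whose derived design at every point is resolvable. -/
open Finset

/-- A parallel class on point set `Y`: a collection of blocks that partitions `Y`. -/
def IsParallelClass (Y : Finset ℕ) (P : Finset (Finset ℕ)) : Prop :=
  (∀ b ∈ P, b ⊆ Y) ∧ ∀ y ∈ Y, ∃! b, b ∈ P ∧ y ∈ b

/-- A block collection `B` on point set `Y` is resolvable if it can be partitioned
into parallel classes of `Y`. -/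
def Resolvable (Y : Finset ℕ) (B : Finset (Finset ℕ)) : Prop :=
  ∃ (r : ℕ) (P : Fin r → Finset (Finset ℕ)),
    (∀ i, IsParallelClass Y (P i)) ∧ (∀ i, P i ⊆ B) ∧ ∀ b ∈ B, ∃! i, b ∈ P i

/-- The blocks of the derived design at a point `x`:
`{B \ {x} : x ∈ B, B ∈ B}`. -/
def derivedBlocks (B : Finset (Finset ℕ)) (x : ℕ) : Finset (Finset ℕ) :=
  (B.filter fun b => x ∈ b).image fun b => b.erase x

/-- A Steiner system S(t, k, v) on point set `X` with block collection `B`. -/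
def IsSteiner (t k v : ℕ) (X : Finset ℕ) (B : Finset (Finset ℕ)) : Prop :=
  X.card = v ∧ (∀ b ∈ B, b ⊆ X ∧ b.card = k) ∧
  ∀ T ⊆ X, T.card = t → ∃! b, b ∈ B ∧ T ⊆ b

/-- An RDS(t, k, v): a Steiner system S(t, k, v) whose derived design at every
point is resolvable. -/
def IsRDS (t k v : ℕ) (X : Finset ℕ) (B : Finset (Finset ℕ)) : Prop :=
  IsSteiner t k v X B ∧ ∀ x ∈ X, Resolvable (X.erase x) (derivedBlocks B x)

/-- Existence of an RDS(t, k, v). -/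
def ExistsRDS (t k v : ℕ) : Prop := ∃ X B, IsRDS t k v X B

/-- Existence of an RDSQS(v), i.e. an RDS(3, 4, v). -/
def ExistsRDSQS (v : ℕ) : Prop := ExistsRDS 3 4 v

/-- A Kirkman triple system KTS(v): a resolvable Steiner triple system. -/
def IsKTS (v : ℕ) (X : Finset ℕ) (B : Finset (Finset ℕ)) : Prop :=
  IsSteiner 2 3 v X B ∧ Resolvable X B

/-- Existence of a large set of Kirkman triple systems LKTS(v): a partition of
all 3-element subsets of a v-element set into v - 2 classes, each a KTS(v). -/
def ExistsLKTS (v : ℕ) : Prop :=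
  ∃ (X : Finset ℕ) (C : Fin (v - 2) → Finset (Finset ℕ)),
    X.card = v ∧ (∀ i, IsKTS v X (C i)) ∧
    (∀ T : Finset ℕ, (T ⊆ X ∧ T.card = 3) ↔ ∃ i, T ∈ C i) ∧
    ∀ (T : Finset ℕ) (i j : Fin (v - 2)), T ∈ C i → T ∈ C j → i = j

/-- A t-wise balanced design S(t, K, v) with block sizes from the set `K`. -/
def IsTBD (t : ℕ) (K : Set ℕ) (v : ℕ) (X : Finset ℕ) (B : Finset (Finset ℕ)) : Prop :=
  X.card = v ∧ (∀ b ∈ B, b ⊆ X ∧ b.card ∈ K) ∧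
  ∀ T ⊆ X, T.card = t → ∃! b, b ∈ B ∧ T ⊆ b

/-- A group divisible design GDD(t, K, g*n) of type g^n: `Gs` is a partition of
`X` into `n` groups of size `g`; blocks have sizes in `K`, meet every group in
at most one point, and every t-subset of `X` meeting every group in at most one
point lies in exactly one block. -/
def IsGDD (t : ℕ) (K : Set ℕ) (g n : ℕ) (X : Finset ℕ)
    (Gs Bs : Finset (Finset ℕ)) : Prop :=
  X.card = g * n ∧ Gs.card = n ∧
  (∀ G ∈ Gs, G ⊆ X ∧ G.card = g) ∧
  (∀ x ∈ X, ∃! G, G ∈ Gs ∧ x ∈ G) ∧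
  (∀ b ∈ Bs, b ⊆ X ∧ b.card ∈ K) ∧
  (∀ b ∈ Bs, ∀ G ∈ Gs, (b ∩ G).card ≤ 1) ∧
  ∀ T ⊆ X, T.card = t → (∀ G ∈ Gs, (T ∩ G).card ≤ 1) → ∃! b, b ∈ Bs ∧ T ⊆ b

/-- An RDGDD(t, K, g*n) of type g^n: a GDD whose derived design at every point
(on point set `X \ G`, where `G` is the group of the point) is resolvable. -/
def IsRDGDD (t : ℕ) (K : Set ℕ) (g n : ℕ) (X : Finset ℕ)
    (Gs Bs : Finset (Finset ℕ)) : Prop :=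
  IsGDD t K g n X Gs Bs ∧
  ∀ x ∈ X, ∀ G ∈ Gs, x ∈ G → Resolvable (X \ G) (derivedBlocks Bs x)

/-- An RDSQS*(v): an SQS(v) with v ≡ 1 (mod 3) such that, for every point `x`,
the derived blocks at `x` contain a parallel class `P'` (enumerated by `Bk`);
the multiset consisting of each triple of `P'` three times and each remaining
derived triple twice can be partitioned into (v-1) parallel classes
`P k l` (k ranging over Fin ((v-1)/3), l over Fin 3); and for each `k` the three
parallel classes `P k l` share the common triple `Bk k`. -/
def IsRDSQSstar (v : ℕ) (X : Finset ℕ) (B : Finset (Finset ℕ)) : Prop :=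
  IsSteiner 3 4 v X B ∧ v % 3 = 1 ∧
  ∀ x ∈ X, ∃ (P' : Finset (Finset ℕ)) (Bk : Fin ((v - 1) / 3) → Finset ℕ)
    (P : Fin ((v - 1) / 3) → Fin 3 → Finset (Finset ℕ)),
    P' ⊆ derivedBlocks B x ∧
    IsParallelClass (X.erase x) P' ∧
    (∀ k, Bk k ∈ P') ∧
    (∀ b ∈ P', ∃ k, Bk k = b) ∧
    Function.Injective Bk ∧
    (∀ k l, IsParallelClass (X.erase x) (P k l)) ∧
    ((∑ k, ∑ l, (P k l).val) =
        3 • P'.val + 2 • ((derivedBlocks B x) \ P').val) ∧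
    ∀ k l, Bk k ∈ P k l

namespace RD

abbrev V := Fin 4

def ad (a b : V) : V := Fin.ofNat 4 (a.val ^^^ b.val)
def ml (a b : V) : V := ![![0,0,0,0],![0,1,2,3],![0,2,3,1],![0,3,1,2]] a b
def dv (a b : V) : V := ml a (![0,1,3,2] b)

lemma ad_comm (a b : V) : ad a b = ad b a := by revert a b; decide
lemma ad_assoc (a b c : V) : ad (ad a b) c = ad a (ad b c) := by revert a b c; decide
lemma ad_self (a : V) : ad a a = 0 := by revert a; decide
lemma ad_zero (a : V) : ad a 0 = a := by revert a; decide
lemma zero_ad (a : V) : ad 0 a = a := by revert a; decide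
lemma ad_cancel (a b : V) : ad a (ad a b) = b := by revert a b; decide
lemma ad_eq_zero (a b : V) : ad a b = 0 → a = b := by revert a b; decide
lemma ml_add (a b c : V) : ml a (ad b c) = ad (ml a b) (ml a c) := by revert a b c; decide
lemma dv_ml (i s : V) : i ≠ 0 → dv (ml i s) i = s := by revert i s; decide
lemma ml_dv (i a : V) : i ≠ 0 → ml i (dv a i) = a := by revert i a; decide
lemma ml_ad' (i j s : V) : ad (ml i s) (ml j s) = ml (ad i j) s := by revert i j s; decide

abbrev W := V × V
def adW (x y : W) : W := (ad x.1 y.1, ad x.2 y.2)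

def k16 (x : W) : Option V := if x.1 = 0 then none else some (dv x.2 x.1)
def l16 (x : W) : V := if x.1 = 0 then x.2 else x.1

def enc (x : W) : ℕ := x.1.val * 4 + x.2.val

def T16 : ℕ := 0xceb904dd409bec0c0fd8b05058bfdc0ef090ca7c07afe90bd90fe60fe60bd90980f07cef089ec700bce70d9ce0bd97040a6cd0f046adcf0d570e9f0d570e9f0d0cffc0d0ab66ba0450e0e45a0cfcfa008768067bc0ecbe09ba09ba06fe06fe0bffbedde6cc60000ededc9c9bfbf0000cc9977ffaaee000000000000000000000687201331027860604a310202314a6084050231201348507a50132013207a502301045a1032a54001234086230186401032580b012385b03210a6b03210a6b03021120308455480120303128097978003123021490d94d02130213057d057d07447a88a599500008a8a565647470000665544bb88dd00000000000000000000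
def z16 (ε : Fin 2) (x y : W) : W :=
  let t := T16 >>> (4 * ((ε.val * 16 + enc x) * 16 + enc y))
  (Fin.ofNat 4 (t / 4), Fin.ofNat 4 t)

def TC : ℕ := 0x264053773504620205736040436572065037240270456304730506250624730037504265730624056204073205673403046270503647250740263507402635070255207064334603470703460252560530635604207247006420642357035704554677632230000676723234545000022334455667700000000000000000000
def c16 (x y : W) : V × Fin 2 :=
  let t := TC >>> (4 * (enc x * 16 + enc y))
  (Fin.ofNat 4 (t / 2 % 8), Fin.ofNat 2 t)

set_option maxRecDepth 100000
set_option maxHeartbeats 4000000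

lemma z16_symm : ∀ (ε : Fin 2) (x y : W), k16 x ≠ k16 y → z16 ε x y = z16 ε y x := by
  decide +kernel
lemma z16_third : ∀ (ε : Fin 2) (x y : W), x ≠ 0 → y ≠ 0 → k16 x ≠ k16 y →
    z16 ε x (adW x y) = z16 ε x y := by
  decide +kernel
lemma k16_third : ∀ (x y : W), x ≠ 0 → y ≠ 0 → k16 x ≠ k16 y →
    k16 x ≠ k16 (adW x y) := by
  decide +kernel
lemma z16_ne : ∀ (ε : Fin 2) (x y : W), x ≠ 0 → y ≠ 0 → k16 x ≠ k16 y →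
    z16 ε x y ≠ 0 ∧ k16 (z16 ε x y) ≠ k16 x := by
  decide +kernel
lemma z16_ex : ∀ (x z : W), x ≠ 0 → z ≠ 0 → k16 z ≠ k16 x →
    ∃ y : W, ∃ ε : Fin 2, y ≠ 0 ∧ k16 x ≠ k16 y ∧ z16 ε x y = z := by
  decide +kernel
lemma z16_inj' : ∀ (x y y' : W) (ε ε' : Fin 2), (x ≠ 0 ∧ y ≠ 0 ∧ y' ≠ 0 ∧ k16 x ≠ k16 y ∧
    k16 x ≠ k16 y' ∧ z16 ε x y = z16 ε' x y') →
    ε = ε' ∧ (y' = y ∨ y' = adW x y) := by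
  decide +kernel
lemma z16_inj (x y y' : W) (ε ε' : Fin 2) (hx : x ≠ 0) (hy : y ≠ 0) (hy' : y' ≠ 0)
    (h : k16 x ≠ k16 y) (h' : k16 x ≠ k16 y') (hz : z16 ε x y = z16 ε' x y') :
    ε = ε' ∧ (y' = y ∨ y' = adW x y) := z16_inj' x y y' ε ε' ⟨hx, hy, hy', h, h', hz⟩

lemma c16_symm : ∀ (x y : W), c16 x y = c16 y x := by
  decide +kernel
lemma c16_third : ∀ (x y : W), x ≠ 0 → y ≠ 0 → x ≠ y →
    c16 x (adW x y) = c16 x y := by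
  decide +kernel
lemma c16_ex : ∀ (x : W), x ≠ 0 → ∀ c : V × Fin 2, (c.1 ≠ 0 ∨ c.2 = 0) →
    ∃ y : W, y ≠ 0 ∧ y ≠ x ∧ c16 x y = c := by
  decide +kernel
lemma c16_val : ∀ (x y : W), x ≠ 0 → y ≠ 0 → x ≠ y →
    (c16 x y).1 ≠ 0 ∨ (c16 x y).2 = 0 := by
  decide +kernel
lemma c16_ell : ∀ (a : V) (y : W), a ≠ 0 → y ≠ 0 → y ≠ (0, a) →
    ((c16 (0, a) y).1 = 0 ↔ y.1 = 0) := by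
  decide +kernel
lemma c16_inj : ∀ (x : W), x ≠ 0 → ∀ y : W, y ≠ 0 → y ≠ x → ∀ y' : W, y' ≠ 0 →
    y' ≠ x → c16 x y = c16 x y' → (y' = y ∨ y' = adW x y) := by
  decide +kernel

structure SQ {α : Type} (q : α → α → α → α) : Prop where
  c12 : ∀ x y z, q x y z = q y x z
  c23 : ∀ x y z, q x y z = q x z y
  idem : ∀ x y, q x x y = y
  inv : ∀ x y z, q x y (q x y z) = z

structure Star {α : Type} (q : α → α → α → α) (o : α) where
  K : Type
  e : K → V → α
  κ : α → K
  l : α → V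
  zz : Fin 2 → α → α → α
  e0 : ∀ k, e k 0 = o
  ek : ∀ k i, i ≠ 0 → κ (e k i) = k
  el : ∀ k i, l (e k i) = i
  ke : ∀ p, e (κ p) (l p) = p
  hom : ∀ k i j, q o (e k i) (e k j) = e k (ad i j)
  zs : ∀ ε p r, p ≠ o → r ≠ o → κ p ≠ κ r → zz ε p r = zz ε r p
  zt : ∀ ε p r, p ≠ o → r ≠ o → κ p ≠ κ r → zz ε p (q o p r) = zz ε p r
  zo : ∀ ε p r, p ≠ o → r ≠ o → κ p ≠ κ r → zz ε p r ≠ o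
  zk : ∀ ε p r, p ≠ o → r ≠ o → κ p ≠ κ r → κ (zz ε p r) ≠ κ p
  ex : ∀ p z, p ≠ o → z ≠ o → κ z ≠ κ p →
    ∃ r ε, r ≠ o ∧ κ p ≠ κ r ∧ zz ε p r = z
  inj : ∀ p r r' ε ε', p ≠ o → r ≠ o → r' ≠ o → κ p ≠ κ r → κ p ≠ κ r' →
    zz ε p r = zz ε' p r' → ε = ε' ∧ (r' = r ∨ r' = q o p r)

structure Rds {α : Type} (q : α → α → α → α) (o : α) where
  C : Type
  c : α → α → C
  cs : ∀ p r, p ≠ o → r ≠ o → p ≠ r → c p r = c r p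
  ct : ∀ p r, p ≠ o → r ≠ o → p ≠ r → c p (q o p r) = c p r
  inj : ∀ p r r', p ≠ o → r ≠ o → r' ≠ o → p ≠ r → p ≠ r' → c p r = c p r' →
    r' = r ∨ r' = q o p r
  ex : ∀ p p0 r0, p ≠ o → p0 ≠ o → r0 ≠ o → p0 ≠ r0 → ∃ r, r ≠ o ∧ p ≠ r ∧ c p r = c p0 r0

/-- transport along an isomorphism of derived loops -/
def Star.map {α : Type} {q : α → α → α → α} {o o' : α} (S : Star q o) (φ : α ≃ α)
    (ho : φ o = o') (hq : ∀ a b, q o' (φ a) (φ b) = φ (q o a b)) : Star q o' where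
  K := S.K
  e k i := φ (S.e k i)
  κ p := S.κ (φ.symm p)
  l p := S.l (φ.symm p)
  zz ε p r := φ (S.zz ε (φ.symm p) (φ.symm r))
  e0 k := by rw [S.e0, ho]
  ek k i h := by simpa using S.ek k i h
  el k i := by simpa using S.el k i
  ke p := by simp [S.ke]
  hom k i j := by rw [hq, S.hom]
  zs ε p r hp hr h := by
    obtain ⟨p, rfl⟩ := φ.surjective p
    obtain ⟨r, rfl⟩ := φ.surjective r
    subst ho
    simp only [φ.symm_apply_apply, ne_eq, φ.apply_eq_iff_eq] at *
    exact S.zs ε p r hp hr h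
  zt ε p r hp hr h := by
    obtain ⟨p, rfl⟩ := φ.surjective p
    obtain ⟨r, rfl⟩ := φ.surjective r
    subst ho
    simp only [φ.symm_apply_apply, ne_eq, φ.apply_eq_iff_eq, hq] at *
    exact S.zt ε p r hp hr h
  zo ε p r hp hr h := by
    obtain ⟨p, rfl⟩ := φ.surjective p
    obtain ⟨r, rfl⟩ := φ.surjective r
    subst ho
    simp only [φ.symm_apply_apply, ne_eq, φ.apply_eq_iff_eq] at *
    exact S.zo ε p r hp hr h
  zk ε p r hp hr h := by
    obtain ⟨p, rfl⟩ := φ.surjective p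
    obtain ⟨r, rfl⟩ := φ.surjective r
    subst ho
    simp only [φ.symm_apply_apply, ne_eq, φ.apply_eq_iff_eq] at *
    exact S.zk ε p r hp hr h
  ex p z hp hz h := by
    obtain ⟨p, rfl⟩ := φ.surjective p
    obtain ⟨z, rfl⟩ := φ.surjective z
    subst ho
    simp only [φ.symm_apply_apply, ne_eq, φ.apply_eq_iff_eq] at *
    obtain ⟨r, ε, h1, h2, h3⟩ := S.ex p z hp hz h
    exact ⟨φ r, ε, by simpa using h1, by simpa using h2, by simpa using h3⟩
  inj p r r' ε ε' hp hr hr' h h' hz := by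
    obtain ⟨p, rfl⟩ := φ.surjective p
    obtain ⟨r, rfl⟩ := φ.surjective r
    obtain ⟨r', rfl⟩ := φ.surjective r'
    subst ho
    simp only [φ.symm_apply_apply, ne_eq, φ.apply_eq_iff_eq, hq] at *
    exact S.inj p r r' ε ε' hp hr hr' h h' hz

def Rds.map {α : Type} {q : α → α → α → α} {o o' : α} (S : Rds q o) (φ : α ≃ α)
    (ho : φ o = o') (hq : ∀ a b, q o' (φ a) (φ b) = φ (q o a b)) : Rds q o' where
  C := S.C
  c p r := S.c (φ.symm p) (φ.symm r)
  cs p r hp hr h := by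
    obtain ⟨p, rfl⟩ := φ.surjective p
    obtain ⟨r, rfl⟩ := φ.surjective r
    subst ho
    simp only [φ.symm_apply_apply, ne_eq, φ.apply_eq_iff_eq] at *
    exact S.cs p r hp hr h
  ct p r hp hr h := by
    obtain ⟨p, rfl⟩ := φ.surjective p
    obtain ⟨r, rfl⟩ := φ.surjective r
    subst ho
    simp only [φ.symm_apply_apply, ne_eq, φ.apply_eq_iff_eq, hq] at *
    exact S.ct p r hp hr h
  inj p r r' hp hr hr' h h' hz := by
    obtain ⟨p, rfl⟩ := φ.surjective p
    obtain ⟨r, rfl⟩ := φ.surjective r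
    obtain ⟨r', rfl⟩ := φ.surjective r'
    subst ho
    simp only [φ.symm_apply_apply, ne_eq, φ.apply_eq_iff_eq, hq] at *
    exact S.inj p r r' hp hr hr' h h' hz
  ex p p0 r0 hp hp0 hr0 h := by
    obtain ⟨p, rfl⟩ := φ.surjective p
    obtain ⟨p0, rfl⟩ := φ.surjective p0
    obtain ⟨r0, rfl⟩ := φ.surjective r0
    subst ho
    simp only [φ.symm_apply_apply, ne_eq, φ.apply_eq_iff_eq] at *
    obtain ⟨r, h1, h2, h3⟩ := S.ex p p0 r0 hp hp0 hr0 h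
    exact ⟨φ r, by simpa using h1, by simpa using h2, by simpa using h3⟩

def pq {α : Type} (q : α → α → α → α) (x y z : α × V) : α × V :=
  (q x.1 y.1 z.1, ad x.2 (ad y.2 z.2))

lemma pq_SQ {α : Type} {q : α → α → α → α} (h : SQ q) : SQ (pq q) where
  c12 x y z := by
    simp only [pq, h.c12 x.1 y.1 z.1, Prod.mk.injEq, true_and]
    rw [← ad_assoc, ad_comm x.2, ad_assoc]
  c23 x y z := by
    simp only [pq, h.c23 x.1 y.1 z.1, ad_comm y.2]
  idem x y := by
    simp only [pq, h.idem, ad_cancel]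
  inv x y z := by
    simp only [pq, h.inv]
    ext1
    · rfl
    · rw [← ad_assoc, ad_comm x.2 y.2, ad_assoc, ad_cancel, ad_cancel]

lemma SQ.ne {α : Type} {q : α → α → α → α} {o : α} (h : SQ q) (p r : α) (hp : p ≠ o) (hr : r ≠ o)
    (hpr : p ≠ r) : q o p r ≠ o ∧ q o p r ≠ p ∧ q o p r ≠ r := by
  refine ⟨fun hh => ?_, fun hh => ?_, fun hh => ?_⟩
  · have := h.inv o p r
    rw [hh, h.c23, h.idem] at this; exact hpr this
  · have := h.inv o p r
    rw [hh, h.c12, h.c23, h.idem] at this; exact hr this.symm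
  · have := h.inv o r p
    rw [h.c23 o r p, hh, h.c12, h.c23, h.idem] at this; exact hp this.symm

/-- label of `p` in its triple with `r` -/
lemma exists_lab {α : Type} [Finite α] {q : α → α → α → α} (h : SQ q) (o : α) :
    ∃ L : α → α → V, ∀ p r, p ≠ o → r ≠ o → p ≠ r →
      L p (q o p r) = L p r ∧ L p r ≠ 0 ∧ L p r ≠ L r p ∧ L (q o p r) p = ad (L p r) (L r p) := by
  classical
  obtain ⟨n, ⟨f⟩⟩ := Finite.exists_equiv_fin α
  refine ⟨fun p r => Fin.ofNat 4 (1 + (if f r < f p then 1 else 0)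
    + (if f (q o p r) < f p then 1 else 0)), ?_⟩
  intro p r hp hr hpr
  obtain ⟨h1, h2, h3⟩ := h.ne p r hp hr hpr
  have e1 : q o p (q o p r) = r := h.inv o p r
  have e2 : q o r p = q o p r := h.c23 _ _ _
  have e3 : q o (q o p r) p = r := by rw [h.c23, e1]
  simp only [e1, e2, e3]
  have a1 : f p ≠ f r := fun hh => hpr (f.injective hh)
  have a2 : f (q o p r) ≠ f r := fun hh => h3 (f.injective hh)
  have a3 : f (q o p r) ≠ f p := fun hh => h2 (f.injective hh)
  generalize f p = x at *
  generalize f r = y at *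
  generalize f (q o p r) = z at *
  rcases lt_or_gt_of_ne a1 with b1 | b1 <;> rcases lt_or_gt_of_ne a2 with b2 | b2 <;>
    rcases lt_or_gt_of_ne a3 with b3 | b3 <;>
    first
    | (exfalso; omega)
    | (simp only [b1, b2, b3, not_lt_of_gt b1, not_lt_of_gt b2, not_lt_of_gt b3, if_true, if_false]
       decide)

lemma V_solve (m a i u : V) : i ≠ 0 → ∃ b, ad (ml m a) (ml i b) = u := by
  revert m a i u; decide +kernel
lemma V_inj (m a i b b' : V) : i ≠ 0 → ad (ml m a) (ml i b) = ad (ml m a) (ml i b') → b' = b := by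
  revert m a i b b'; decide +kernel
lemma zero_ml (s : V) : ml 0 s = 0 := by revert s; decide
lemma V_third (i j a b : V) : ad (ml (ad i j) a) (ml i (ad a b)) = ad (ml j a) (ml i b) := by
  revert i j a b; decide +kernel

section prod
variable {α : Type} {q : α → α → α → α} {o : α}

lemma Star.l_zero (S : Star q o) : S.l o = 0 := by
  have := S.el (S.κ o) 0
  rwa [S.e0] at this

lemma Star.l_eq_zero (S : Star q o) (p : α) : S.l p = 0 ↔ p = o := by
  constructor
  · intro h
    have := S.ke p
    rw [h, S.e0] at this; exact this.symm
  · rintro rfl; exact S.l_zero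

lemma Star.e_eq (S : Star q o) (k : S.K) (i : V) : S.e k i = o ↔ i = 0 := by
  rw [← S.l_eq_zero, S.el]

def Loc (S : Star q o) (y w : α) : Prop := y = o ∨ w = o ∨ S.κ y = S.κ w

open Classical in
noncomputable def kk (S : Star q o) (y w : α) : S.K := if y = o then S.κ w else S.κ y

def hat (S : Star q o) (k : S.K) (x : W) : α × V := (S.e k x.1, x.2)
def cd (S : Star q o) (p : α × V) : W := (S.l p.1, p.2)

lemma cd_hat (S : Star q o) (k : S.K) (x : W) : cd S (hat S k x) = x := by
  simp [cd, hat, S.el]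

lemma hat_inj (S : Star q o) (k : S.K) (x y : W) : hat S k x = hat S k y ↔ x = y := by
  constructor
  · intro h
    rw [← cd_hat S k x, h, cd_hat]
  · rintro rfl; rfl

lemma hat_zero (S : Star q o) (k : S.K) : hat S k 0 = (o, 0) := by
  simp [hat, S.e0]

lemma hat_eq (S : Star q o) (k : S.K) (x : W) : hat S k x = (o, 0) ↔ x = 0 := by
  rw [← hat_zero S k, hat_inj]

lemma Loc.symm {S : Star q o} {y w : α} (h : Loc S y w) : Loc S w y := by
  unfold Loc at *; tauto

lemma hat_cd_left (S : Star q o) (p r : α × V) (h : Loc S p.1 r.1) :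
    hat S (kk S p.1 r.1) (cd S p) = p := by
  obtain ⟨y, a⟩ := p
  simp only [hat, cd, kk, Prod.mk.injEq, and_true]
  split_ifs with h1
  · rw [show y = o from h1, S.l_zero, S.e0]
  · exact S.ke y

lemma hat_cd_right (S : Star q o) (p r : α × V) (h : Loc S p.1 r.1) :
    hat S (kk S p.1 r.1) (cd S r) = r := by
  obtain ⟨y, a⟩ := r
  simp only [hat, cd, kk, Prod.mk.injEq, and_true]
  split_ifs with h1
  · exact S.ke y
  · rcases h with h | h | h
    · exact absurd h h1
    · rw [show y = o from h, S.l_zero, S.e0]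
    · rw [show S.κ p.1 = S.κ y from h]; exact S.ke y

lemma kk_e (S : Star q o) (k : S.K) (i j : V) (h : i ≠ 0 ∨ j ≠ 0) :
    kk S (S.e k i) (S.e k j) = k := by
  unfold kk
  split_ifs with h1
  · rw [S.e_eq] at h1
    exact S.ek k j (by tauto)
  · rw [S.e_eq] at h1
    exact S.ek k i h1

lemma loc_e (S : Star q o) (k : S.K) (i j : V) : Loc S (S.e k i) (S.e k j) := by
  unfold Loc
  rw [S.e_eq, S.e_eq]
  by_cases h1 : i = 0
  · exact Or.inl h1
  by_cases h2 : j = 0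
  · exact Or.inr (Or.inl h2)
  · right; right; rw [S.ek k i h1, S.ek k j h2]

lemma Loc.ex {S : Star q o} {p r : α × V} (h : Loc S p.1 r.1) :
    ∃ k x y, p = hat S k x ∧ r = hat S k y :=
  ⟨_, _, _, (hat_cd_left S p r h).symm, (hat_cd_right S p r h).symm⟩

lemma pq_hat (S : Star q o) (k : S.K) (x y : W) :
    pq q (o, 0) (hat S k x) (hat S k y) = hat S k (adW x y) := by
  simp [pq, hat, adW, S.hom, zero_ad]

def kp (S : Star q o) (p : α × V) : Option (S.K × V) := (k16 (cd S p)).map (fun s => (S.κ p.1, s))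

lemma kp_hat (S : Star q o) (k : S.K) (x : W) :
    kp S (hat S k x) = (k16 x).map (fun s => (k, s)) := by
  unfold kp
  rw [cd_hat]
  by_cases h : x.1 = 0
  · simp [k16, h]
  · simp only [k16, h, if_false, hat]
    rw [S.ek k _ h]

lemma kp_hat_ne (S : Star q o) (k : S.K) (x y : W) :
    kp S (hat S k x) ≠ kp S (hat S k y) ↔ k16 x ≠ k16 y := by
  rw [kp_hat, kp_hat, ne_eq, ne_eq, not_iff_not]
  constructor
  · intro h
    refine Option.map_injective ?_ h
    intro a b hab
    simpa using hab
  · intro h; rw [h]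

lemma kp_ne_of_not_loc (S : Star q o) (p r : α × V) (h : ¬ Loc S p.1 r.1) : kp S p ≠ kp S r := by
  unfold Loc at h
  push Not at h
  obtain ⟨h1, h2, h3⟩ := h
  unfold kp k16 cd
  simp only [S.l_eq_zero, h1, h2, if_false, Option.map_some, ne_eq, Option.some.injEq,
    Prod.mk.injEq, h3, false_and, not_false_eq_true]

def UU (L : α → α → V) (p r : α × V) : V := ad (ml (L r.1 p.1) p.2) (ml (L p.1 r.1) r.2)

lemma UU_symm (L : α → α → V) (p r : α × V) : UU L p r = UU L r p := ad_comm _ _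

open Classical in
noncomputable def zp (S : Star q o) (L : α → α → V) (ε : Fin 2) (p r : α × V) : α × V :=
  if Loc S p.1 r.1 then hat S (kk S p.1 r.1) (z16 ε (cd S p) (cd S r))
  else (S.zz ε p.1 r.1, UU L p r)

lemma k16_ne {x y : W} (h : k16 x ≠ k16 y) : x.1 ≠ 0 ∨ y.1 ≠ 0 := by
  by_contra hh
  push Not at hh
  apply h; simp [k16, hh.1, hh.2]

lemma zp_hat (S : Star q o) (L : α → α → V) (ε : Fin 2) (k : S.K) (x y : W)
    (h : k16 x ≠ k16 y) : zp S L ε (hat S k x) (hat S k y) = hat S k (z16 ε x y) := by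
  unfold zp
  have h1 : Loc S (hat S k x).1 (hat S k y).1 := loc_e S k _ _
  rw [if_pos h1, cd_hat, cd_hat]
  congr 1
  exact kk_e S k _ _ (k16_ne h)

lemma zp_non (S : Star q o) (L : α → α → V) (ε : Fin 2) (p r : α × V)
    (h : ¬ Loc S p.1 r.1) : zp S L ε p r = (S.zz ε p.1 r.1, UU L p r) := by
  unfold zp; rw [if_neg h]

lemma not_loc_third (hq : SQ q) (S : Star q o) (y w : α) (h : ¬ Loc S y w) :
    ¬ Loc S y (q o y w) := by
  intro h'
  have h0 : ¬ (y = o) := fun hh => h (Or.inl hh)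
  obtain ⟨k, x, z, h1, h2⟩ := Loc.ex (p := (y, 0)) (r := (q o y w, 0)) h'
  have h3 : q o y (q o y w) = w := hq.inv _ _ _
  simp only [hat, Prod.mk.injEq] at h1 h2
  rw [h1.1] at h
  rw [h2.1, h1.1, S.hom] at h3
  rw [← h3] at h
  exact h (loc_e _ _ _ _)

lemma not_loc_zz (S : Star q o) (ε : Fin 2) (y w : α) (h : ¬ Loc S y w) :
    ¬ Loc S y (S.zz ε y w) := by
  unfold Loc at *
  push Not at *
  exact ⟨h.1, S.zo ε y w h.1 h.2.1 h.2.2, (S.zk ε y w h.1 h.2.1 h.2.2).symm⟩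

def Lab (q : α → α → α → α) (o : α) (L : α → α → V) : Prop :=
  ∀ p r, p ≠ o → r ≠ o → p ≠ r →
      L p (q o p r) = L p r ∧ L p r ≠ 0 ∧ L p r ≠ L r p ∧ L (q o p r) p = ad (L p r) (L r p)

lemma not_loc_ne {S : Star q o} {y w : α} (h : ¬ Loc S y w) : y ≠ o ∧ w ≠ o ∧ y ≠ w := by
  unfold Loc at h
  push Not at h
  exact ⟨h.1, h.2.1, fun hh => h.2.2 (by rw [hh])⟩

lemma UU_third {L : α → α → V} (hL : Lab q o L) (p r : α × V) (h1 : p.1 ≠ o) (h2 : r.1 ≠ o)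
    (h3 : p.1 ≠ r.1) : UU L p (pq q (o, 0) p r) = UU L p r := by
  obtain ⟨a1, a2, a3, a4⟩ := hL p.1 r.1 h1 h2 h3
  simp only [UU, pq, zero_ad]
  rw [a1, a4, V_third]

lemma UU_solve {L : α → α → V} (hL : Lab q o L) (p : α × V) (r : α) (u : V) (h1 : p.1 ≠ o)
    (h2 : r ≠ o) (h3 : p.1 ≠ r) : ∃ b, UU L p (r, b) = u :=
  V_solve (L r p.1) p.2 (L p.1 r) u (hL p.1 r h1 h2 h3).2.1

lemma UU_inj {L : α → α → V} (hL : Lab q o L) (p : α × V) (r : α) (b b' : V) (h1 : p.1 ≠ o)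
    (h2 : r ≠ o) (h3 : p.1 ≠ r) (h : UU L p (r, b) = UU L p (r, b')) : b' = b :=
  V_inj _ _ _ _ _ (hL p.1 r h1 h2 h3).2.1 h

lemma UU_fin (hq : SQ q) {S : Star q o} {L : α → α → V} (hL : Lab q o L) (p r r' : α × V)
    (h1 : ¬ Loc S p.1 r.1) (h : r'.1 = r.1 ∨ r'.1 = q o p.1 r.1) (hu : UU L p r = UU L p r') :
    r' = r ∨ r' = pq q (o, 0) p r := by
  have h2 := not_loc_ne h1
  have h3 := not_loc_ne (not_loc_third hq S _ _ h1)
  obtain ⟨y, b⟩ := r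
  obtain ⟨y', b'⟩ := r'
  simp only at h h2 h3
  rcases h with rfl | rfl
  · left
    rw [UU_inj hL p y' b b' h2.1 h2.2.1 h2.2.2 hu]
  · right
    rw [← UU_third hL _ _ h2.1 h2.2.1 h2.2.2] at hu
    rw [UU_inj hL p _ _ b' h3.1 h3.2.1 h3.2.2 hu]
    rfl

lemma zp_locz {S : Star q o} {L : α → α → V} {ε : Fin 2} {p r : α × V} :
    Loc S p.1 (zp S L ε p r).1 ↔ Loc S p.1 r.1 := by
  constructor
  · intro h
    by_contra h'
    rw [zp_non _ _ _ _ _ h'] at h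
    exact not_loc_zz _ _ _ _ h' h
  · intro h
    have h0 := hat_cd_left S p r h
    unfold zp
    rw [if_pos h]
    set k := kk S p.1 r.1
    have : p.1 = S.e k (cd S p).1 := by
      conv_lhs => rw [← h0]
      rfl
    rw [this]
    exact loc_e _ _ _ _

noncomputable def Star.prod (hq : SQ q) (S : Star q o) (L : α → α → V) (hL : Lab q o L) :
    Star (pq q) (o, (0 : V)) where
  K := Option (S.K × V)
  e k i := match k with
    | none => (o, i)
    | some (k, s) => (S.e k i, ml i s)
  κ := kp S
  l p := l16 (cd S p)
  zz := zp S L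
  e0 k := by
    rcases k with _ | ⟨k, s⟩
    · rfl
    · simp only [S.e0]
      rw [zero_ml]
  ek k i hi := by
    rcases k with _ | ⟨k, s⟩
    · simp [kp, cd, k16, S.l_zero]
    · have := kp_hat S k (i, ml i s)
      simp only [hat] at this
      rw [this]
      simp [k16, hi, dv_ml]
  el k i := by
    rcases k with _ | ⟨k, s⟩
    · simp [cd, l16, S.l_zero]
    · have := cd_hat S k (i, ml i s)
      simp only [hat] at this
      simp only [this, l16]
      split_ifs with h
      · rw [h, zero_ml]
      · rfl
  ke p := by
    obtain ⟨y, a⟩ := p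
    by_cases h : y = o
    · subst h; simp [kp, cd, k16, l16, S.l_zero]
    · have h' := h
      rw [← S.l_eq_zero] at h'
      simp [kp, cd, k16, l16, h', S.ke, ml_dv]
  hom k i j := by
    rcases k with _ | ⟨k, s⟩
    · simp [pq, hq.idem, zero_ad]
    · simp [pq, S.hom, zero_ad, ml_ad']
  zs ε p r hp hr h := by
    by_cases hl : Loc S p.1 r.1
    · obtain ⟨k, x, y, rfl, rfl⟩ := hl.ex
      rw [ne_eq, hat_eq] at hp hr
      rw [kp_hat_ne] at h
      rw [zp_hat _ _ _ _ _ _ h, zp_hat _ _ _ _ _ _ h.symm, z16_symm _ _ _ h]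
    · have hl' : ¬ Loc S r.1 p.1 := fun hh => hl hh.symm
      rw [zp_non _ _ _ _ _ hl, zp_non _ _ _ _ _ hl', UU_symm]
      unfold Loc at hl
      push Not at hl
      rw [S.zs ε _ _ hl.1 hl.2.1 hl.2.2]
  zt ε p r hp hr h := by
    by_cases hl : Loc S p.1 r.1
    · obtain ⟨k, x, y, rfl, rfl⟩ := hl.ex
      rw [ne_eq, hat_eq] at hp hr
      rw [kp_hat_ne] at h
      rw [pq_hat, zp_hat _ _ _ _ _ _ h, zp_hat _ _ _ _ _ _ (k16_third x y hp hr h),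
        z16_third _ _ _ hp hr h]
    · have hl' := not_loc_third hq S _ _ hl
      rw [zp_non _ _ _ _ _ hl, zp_non _ _ _ _ _ hl']
      have hn := not_loc_ne hl
      rw [UU_third hL p r hn.1 hn.2.1 hn.2.2]
      unfold Loc at hl
      push Not at hl
      simp only [pq]
      rw [S.zt ε _ _ hl.1 hl.2.1 hl.2.2]
  zo ε p r hp hr h := by
    by_cases hl : Loc S p.1 r.1
    · obtain ⟨k, x, y, rfl, rfl⟩ := hl.ex
      rw [ne_eq, hat_eq] at hp hr
      rw [kp_hat_ne] at h
      rw [zp_hat _ _ _ _ _ _ h, ne_eq, hat_eq]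
      exact (z16_ne _ _ _ hp hr h).1
    · rw [zp_non _ _ _ _ _ hl]
      have := not_loc_ne (not_loc_zz S ε _ _ hl)
      intro hh
      exact this.2.1 (congrArg Prod.fst hh)
  zk ε p r hp hr h := by
    by_cases hl : Loc S p.1 r.1
    · obtain ⟨k, x, y, rfl, rfl⟩ := hl.ex
      rw [ne_eq, hat_eq] at hp hr
      rw [kp_hat_ne] at h
      rw [zp_hat _ _ _ _ _ _ h, kp_hat_ne]
      exact (z16_ne _ _ _ hp hr h).2
    · apply Ne.symm
      apply kp_ne_of_not_loc
      rw [zp_locz]; exact hl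
  ex p z hp hz h := by
    by_cases hl : Loc S p.1 z.1
    · obtain ⟨k, x, y, rfl, rfl⟩ := hl.ex
      rw [ne_eq, hat_eq] at hp hz
      rw [kp_hat_ne] at h
      obtain ⟨r, ε, h1, h2, h3⟩ := z16_ex x y hp hz h
      refine ⟨hat S k r, ε, ?_, ?_, ?_⟩
      · rwa [ne_eq, hat_eq]
      · rwa [kp_hat_ne]
      · rw [zp_hat _ _ _ _ _ _ h2, h3]
    · have hl' := hl
      unfold Loc at hl'
      push Not at hl'
      obtain ⟨r, ε, h1, h2, h3⟩ := S.ex p.1 z.1 hl'.1 hl'.2.1 hl'.2.2.symm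
      have hn : ¬ Loc S p.1 r := by
        unfold Loc; push Not; exact ⟨hl'.1, h1, h2⟩
      have hm := not_loc_ne hn
      obtain ⟨b, hb⟩ := UU_solve hL p r z.2 hm.1 hm.2.1 hm.2.2
      refine ⟨(r, b), ε, ?_, ?_, ?_⟩
      · intro hh; exact h1 (congrArg Prod.fst hh)
      · exact kp_ne_of_not_loc S p (r, b) hn
      · rw [zp_non _ _ _ _ _ (by exact hn), hb, h3]
  inj p r r' ε ε' hp hr hr' h h' hz := by
    by_cases hl : Loc S p.1 r.1
    · have hl' : Loc S p.1 r'.1 := by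
        rw [← zp_locz (L := L) (ε := ε'), ← hz, zp_locz]; exact hl
      have hlz : Loc S p.1 (zp S L ε p r).1 := zp_locz.2 hl
      obtain ⟨k, x, y, hpx, rfl⟩ := hl.ex
      obtain ⟨k', x', y', hpx', rfl⟩ := hl'.ex
      have hx : x = x' := by
        rw [← cd_hat S k x, ← hpx, hpx', cd_hat]
      subst hx
      have g : k16 x ≠ k16 y := by rwa [hpx, kp_hat_ne] at h
      have g' : k16 x ≠ k16 y' := by rwa [hpx', kp_hat_ne] at h'
      have hx0 : x ≠ 0 := by rwa [hpx, ne_eq, hat_eq] at hp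
      rw [ne_eq, hat_eq] at hr hr'
      have hz1 := hz
      rw [hpx, zp_hat _ _ _ _ _ _ g, ← hpx, hpx', zp_hat _ _ _ _ _ _ g'] at hz
      have hkk : k = k' := by
        by_cases hx1 : x.1 = 0
        · have t1 := (z16_ne ε x y hx0 hr g).2
          have t2 := k16_ne t1
          have t3 : (z16 ε x y).1 ≠ 0 := by tauto
          have t4 : z16 ε x y = z16 ε' x y' := by
            rw [← cd_hat S k (z16 ε x y), hz, cd_hat]
          have := congrArg (fun p => S.κ p.1) hz
          simp only [hat] at this
          rwa [← t4, S.ek _ _ t3, S.ek _ _ t3] at this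
        · rw [hpx] at hpx'
          have := congrArg (fun p => S.κ p.1) hpx'
          simp only [hat] at this
          rwa [S.ek _ _ hx1, S.ek _ _ hx1] at this
      subst hkk
      rw [hat_inj] at hz
      have := z16_inj x y y' ε ε' hx0 hr hr' g g' hz
      rw [hpx, pq_hat, hat_inj, hat_inj]
      exact this
    · have hl' : ¬ Loc S p.1 r'.1 := by
        rw [← zp_locz (L := L) (ε := ε'), ← hz, zp_locz]; exact hl
      rw [zp_non _ _ _ _ _ hl, zp_non _ _ _ _ _ hl', Prod.mk.injEq] at hz
      have k1 := hl
      have k2 := hl'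
      unfold Loc at k1 k2
      push Not at k1 k2
      obtain ⟨m1, m2⟩ := S.inj _ _ _ _ _ k1.1 k1.2.1 k2.2.1 k1.2.2 k2.2.2 hz.1
      exact ⟨m1, UU_fin hq hL p r r' hl m2 hz.2⟩

end prod

def hi (u : V) : Fin 2 := Fin.ofNat 2 (u.val / 2)
def lo (u : V) : Fin 2 := Fin.ofNat 2 u.val
lemma hilo_ex : ∀ ε δ : Fin 2, ∃ u : V, hi u = ε ∧ lo u = δ := by decide
lemma hilo_inj : ∀ u v : V, hi u = hi v → lo u = lo v → u = v := by decide

section rds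
variable {α : Type} {q : α → α → α → α} {o : α}

open Classical in
noncomputable def cp (S : Star q o) (L : α → α → V) (p r : α × V) : α × Fin 2 :=
  if Loc S p.1 r.1 then
    (S.e (kk S p.1 r.1) (c16 (cd S p) (cd S r)).1, (c16 (cd S p) (cd S r)).2)
  else (S.zz (hi (UU L p r)) p.1 r.1, lo (UU L p r))

lemma cp_hat (S : Star q o) (L : α → α → V) (k : S.K) (x y : W) (hx : x ≠ 0) (hy : y ≠ 0)
    (h : x ≠ y) : cp S L (hat S k x) (hat S k y) = (S.e k (c16 x y).1, (c16 x y).2) := by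
  unfold cp
  have h1 : Loc S (hat S k x).1 (hat S k y).1 := loc_e S k _ _
  rw [if_pos h1, cd_hat, cd_hat]
  congr 1
  by_cases hh : x.1 ≠ 0 ∨ y.1 ≠ 0
  · congr 1
    exact kk_e S k _ _ hh
  · push Not at hh
    obtain ⟨x1, a⟩ := x
    obtain ⟨rfl, h3⟩ := hh
    have := (c16_ell a y (by rintro rfl; exact hx rfl) hy h.symm).2 h3
    rw [this, S.e0, S.e0]

lemma cp_non (S : Star q o) (L : α → α → V) (p r : α × V)
    (h : ¬ Loc S p.1 r.1) :
    cp S L p r = (S.zz (hi (UU L p r)) p.1 r.1, lo (UU L p r)) := by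
  unfold cp; rw [if_neg h]

lemma cp_locz {S : Star q o} {L : α → α → V} {p r : α × V} :
    Loc S p.1 (cp S L p r).1 ↔ Loc S p.1 r.1 := by
  constructor
  · intro h
    by_contra h'
    rw [cp_non _ _ _ _ h'] at h
    exact not_loc_zz _ _ _ _ h' h
  · intro h
    have h0 := hat_cd_left S p r h
    unfold cp
    rw [if_pos h]
    set k := kk S p.1 r.1
    have : p.1 = S.e k (cd S p).1 := by
      conv_lhs => rw [← h0]
      rfl
    rw [this]
    exact loc_e _ _ _ _

noncomputable def Star.rds (hq : SQ q) (S : Star q o) (L : α → α → V) (hL : Lab q o L) :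
    Rds (pq q) (o, (0 : V)) where
  C := α × Fin 2
  c := cp S L
  cs p r hp hr h := by
    by_cases hl : Loc S p.1 r.1
    · obtain ⟨k, x, y, rfl, rfl⟩ := hl.ex
      rw [ne_eq, hat_eq] at hp hr
      rw [ne_eq, hat_inj] at h
      rw [cp_hat _ _ _ _ _ hp hr h, cp_hat _ _ _ _ _ hr hp (Ne.symm h), c16_symm]
    · have hl' : ¬ Loc S r.1 p.1 := fun hh => hl hh.symm
      rw [cp_non _ _ _ _ hl, cp_non _ _ _ _ hl', UU_symm]
      unfold Loc at hl
      push Not at hl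
      rw [S.zs _ _ _ hl.1 hl.2.1 hl.2.2]
  ct p r hp hr h := by
    by_cases hl : Loc S p.1 r.1
    · have hne := (pq_SQ hq).ne p r hp hr h
      obtain ⟨k, x, y, rfl, rfl⟩ := hl.ex
      rw [pq_hat, ne_eq, ne_eq, ne_eq, hat_eq, hat_inj, hat_inj] at hne
      rw [ne_eq, hat_eq] at hp hr
      rw [ne_eq, hat_inj] at h
      rw [pq_hat, cp_hat _ _ _ _ _ hp hr h, cp_hat _ _ _ _ _ hp hne.1 (Ne.symm hne.2.1),
        c16_third _ _ hp hr h]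
    · have hl' := not_loc_third hq S _ _ hl
      rw [cp_non _ _ _ _ hl, cp_non _ _ _ _ hl']
      have hn := not_loc_ne hl
      rw [UU_third hL p r hn.1 hn.2.1 hn.2.2]
      unfold Loc at hl
      push Not at hl
      simp only [pq]
      rw [S.zt _ _ _ hl.1 hl.2.1 hl.2.2]
  inj p r r' hp hr hr' h h' hz := by
    by_cases hl : Loc S p.1 r.1
    · have hl' : Loc S p.1 r'.1 := by
        rw [← cp_locz (L := L), ← hz, cp_locz]; exact hl
      obtain ⟨k, x, y, hpx, rfl⟩ := hl.ex
      obtain ⟨k', x', y', hpx', rfl⟩ := hl'.ex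
      have hx : x = x' := by
        rw [← cd_hat S k x, ← hpx, hpx', cd_hat]
      subst hx
      have g : x ≠ y := by rwa [hpx, ne_eq, hat_inj] at h
      have g' : x ≠ y' := by rwa [hpx', ne_eq, hat_inj] at h'
      have hx0 : x ≠ 0 := by rwa [hpx, ne_eq, hat_eq] at hp
      rw [ne_eq, hat_eq] at hr hr'
      rw [hpx, cp_hat _ _ _ _ _ hx0 hr g, ← hpx, hpx', cp_hat _ _ _ _ _ hx0 hr' g',
        Prod.mk.injEq] at hz
      have t4 : c16 x y = c16 x y' := by
        ext1
        · rw [← S.el k (c16 x y).1, hz.1, S.el]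
        · exact hz.2
      have hkk : hat S k' y' = hat S k y' := by
        by_cases hx1 : x.1 = 0
        · by_cases hc : (c16 x y).1 = 0
          · obtain ⟨x1, a⟩ := x
            simp only at hx1
            subst hx1
            rw [t4, c16_ell a y' (by rintro rfl; exact hx0 rfl) hr' g'.symm] at hc
            simp only [hat, hc, S.e0]
          · have := congrArg S.κ hz.1
            rw [← t4, S.ek _ _ hc, S.ek _ _ hc] at this
            rw [this]
        · rw [hpx] at hpx'
          have := congrArg (fun p => S.κ p.1) hpx'
          simp only [hat] at this
          rw [S.ek _ _ hx1, S.ek _ _ hx1] at this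
          rw [this]
      rw [hkk, hpx, pq_hat, hat_inj, hat_inj]
      exact c16_inj x hx0 y hr g.symm y' hr' g'.symm t4
    · have hl' : ¬ Loc S p.1 r'.1 := by
        rw [← cp_locz (L := L), ← hz, cp_locz]; exact hl
      rw [cp_non _ _ _ _ hl, cp_non _ _ _ _ hl', Prod.mk.injEq] at hz
      have k1 := hl
      have k2 := hl'
      unfold Loc at k1 k2
      push Not at k1 k2
      obtain ⟨m1, m2⟩ := S.inj _ _ _ _ _ k1.1 k1.2.1 k2.2.1 k1.2.2 k2.2.2 hz.1
      exact UU_fin hq hL p r r' hl m2 (hilo_inj _ _ m1 hz.2)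
  ex p p0 r0 hp hp0 hr0 h0 := by
    have hv : (cp S L p0 r0).1 ≠ o ∨ (cp S L p0 r0).2 = 0 := by
      by_cases hl : Loc S p0.1 r0.1
      · obtain ⟨k, x, y, rfl, rfl⟩ := hl.ex
        rw [ne_eq, hat_eq] at hp0 hr0
        rw [ne_eq, hat_inj] at h0
        rw [cp_hat _ _ _ _ _ hp0 hr0 h0]
        simp only [ne_eq, S.e_eq]
        exact c16_val x y hp0 hr0 h0
      · left
        rw [cp_non _ _ _ _ hl]
        exact (not_loc_ne (not_loc_zz S _ _ _ hl)).2.1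
    generalize cp S L p0 r0 = c at hv
    obtain ⟨w, δ⟩ := c
    simp only at hv
    by_cases hl : Loc S p.1 w
    · obtain ⟨k, x, y, rfl, hw⟩ := Loc.ex (p := p) (r := (w, 0)) hl
      rw [ne_eq, hat_eq] at hp
      simp only [hat, Prod.mk.injEq] at hw
      rw [hw.1, ne_eq, S.e_eq] at hv
      obtain ⟨r, h1, h2, h3⟩ := c16_ex x hp (y.1, δ) hv
      refine ⟨hat S k r, ?_, ?_, ?_⟩
      · rwa [ne_eq, hat_eq]
      · rw [ne_eq, hat_inj]; exact h2.symm
      · rw [cp_hat _ _ _ _ _ hp h1 h2.symm, h3, hw.1]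
    · have hl' := hl
      unfold Loc at hl'
      push Not at hl'
      obtain ⟨r, ε, h1, h2, h3⟩ := S.ex p.1 w hl'.1 hl'.2.1 hl'.2.2.symm
      have hn : ¬ Loc S p.1 r := by
        unfold Loc; push Not; exact ⟨hl'.1, h1, h2⟩
      have hm := not_loc_ne hn
      obtain ⟨u, hu1, hu2⟩ := hilo_ex ε δ
      obtain ⟨b, hb⟩ := UU_solve hL p r u hm.1 hm.2.1 hm.2.2
      refine ⟨(r, b), ?_, ?_, ?_⟩
      · intro hh; exact h1 (congrArg Prod.fst hh)
      · intro hh; exact hm.2.2 (congrArg Prod.fst hh)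
      · rw [cp_non _ _ _ _ (by exact hn), hb, hu1, hu2, h3]

end rds

def shiftE (α : Type) (a : V) : (α × V) ≃ (α × V) where
  toFun p := (p.1, ad a p.2)
  invFun p := (p.1, ad a p.2)
  left_inv p := by simp [ad_cancel]
  right_inv p := by simp [ad_cancel]

lemma V_sh (a b c : V) : ad a (ad (ad a b) (ad a c)) = ad a (ad b c) := by
  revert a b c; decide

lemma shift_hom {α : Type} (q : α → α → α → α) (o : α) (a : V) (x y : α × V) :
    pq q (o, a) (shiftE α a x) (shiftE α a y) = shiftE α a (pq q (o, 0) x y) := by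
  simp only [pq, shiftE, Equiv.coe_fn_mk, zero_ad]
  rw [V_sh]

def Good (α : Type) (q : α → α → α → α) : Prop := SQ q ∧ ∀ o, Nonempty (Star q o)

lemma Good.prod {α : Type} [Finite α] {q : α → α → α → α} (h : Good α q) : Good (α × V) (pq q) := by
  refine ⟨pq_SQ h.1, ?_⟩
  rintro ⟨o, a⟩
  obtain ⟨S⟩ := h.2 o
  obtain ⟨L, hL⟩ := exists_lab h.1 o
  exact ⟨(S.prod h.1 L hL).map (shiftE α a) (by simp [shiftE, ad_zero]) (shift_hom q o a)⟩

lemma Good.rds {α : Type} [Finite α] {q : α → α → α → α} (h : Good α q) (o : α × V) :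
    Nonempty (Rds (pq q) o) := by
  obtain ⟨o, a⟩ := o
  obtain ⟨S⟩ := h.2 o
  obtain ⟨L, hL⟩ := exists_lab h.1 o
  exact ⟨(S.rds h.1 L hL).map (shiftE α a) (by simp [shiftE, ad_zero]) (shift_hom q o a)⟩

abbrev X := Fin 28
def lk (T i : ℕ) : X := Fin.ofNat 28 (T >>> (5 * i) % 32)

def PT : ℕ := 0xdeb38bdab49ca307b9ac5a928398a41882000000d6f387adc711480bd4c3b0509a365164d5000000ceb786c544306c3116e83d40c5cdd483e4900000c6b3b4b2001a03529c9611af2729ed9ae3400000b9102ddaac8ae67284d490c19835fa561c900000b0467beeaa7409234c08150acc3d31caf4d00000a9805bdb6f4b503a1e422067176b0b8315900000a25d10951b9cb003648238f555becd532f0000009c16d38094dc91a10703c98b1ba93563dd600000931ea198549ec27c941a26109859cbbd62d00000881644a06a09f7079845cd2f693998ab67a0000080c4a2ace64823b79101b626dad2eed6592000007a4a13114242e30d80679575365f366d30e00000740e43442f282daa6dac1a04acde785a6b20000068de60220289275cbb6c094f64e152d517700000620b1788e30c312bb9bb3009aaaf29a5a6a000005b0466902371c0544efada92f96216a66b1000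00521c1030662b4e2266565ed3a8d26fac31700000480ed289cc410660d7145ab73cc2f28d9fa00000435251bd8454642b03550cf3b39b14bc16e000003918b716301a6b40dc59c0248d9ada9b5ea000003286e8348b794179e2c1a68483ee55ca591000002860e53c40624f9b611335e4d8af641d754000002340f0a62b13aa6c4b47a22ca640bb1cef9000001c5828016d5075741a99accef4b8a4de256000001192f3b57062074c12d3a9732be94e8ec20000000c50b519877bb459c875c5c99a5a0968b600000002a077250d3465925e851ead5c4d8f5883b
def LT : ℕ := 0xdeb38bdab49ca307b9ac5a928398a41882000000d6f19a4a77ad9063880128c917c1695398d00000ce37a94e95b5cc740022190af8452a5b1ae00000c675b9d256bd4e830440214708bd4b4b5cc00000bd253dd6dac644009464418eb4a9cc6c5f000000b4a74aeef8ce80110c8531d0952d8d73e1100000ace92b5f79d6022010a33a0ca5a5ae6422f00000a5eb6d633b94ca3220c71002e6362f82d2a000009d6d7c6752dd064298e80044c6b9f08a54b0000095af5ceb13a6c8519d060880d732117a969000008a0c7100251936f82d2a731bac66929deb600000818e800443215fb8a54b635d8cea53a56d70000079d060880428e11da9696b999d627495af5000007080128c8831d6956d8d8be1494ef5b6b1900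00068022190a63a12a5b36e7c2329d2b6be33a0000060440214674194b4b5db845f3a4ad7ae7580000059464418e2005cc6c5f0da557adb58cd2530000050c8531d000898d73e114ed75b5f19d4a7400000490a33a0c1101ae6422f52f76bd73ac4e9200000445f05a54e63758cd253bd6db31c4009464000003be114a96c6bb19d4a74adae6da00110c85000003422f52d2d7333ac4e92b5ea746c22010a3000002ad2a731b17c2929deb6d632200763220c7000002254b635cf84653a56d7c67400887b298e8000001a9696b9908be7495af5ceb0110085d9d06000001398d8be0b4aaf5b6b19a4a65191063ec01000000b1ae7c22952eb6be33a94e83214c74036200000035cc845ea5a6d7ae7589d24428ce83045b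
def ZT : ℕ := 0x73c8e23d4da5ec99566aa3653add3600000000008b21064564bca75a3c3722c2fa567200000000003254932ab29be848daf2aced1bd1e40000003a260000e34749c5250cb1f97b29096b090000003d890000963e74c9f46c4a31960da3e693000000120a0001022a4c5e331d4e93d53388b24b0000003a09726000018aaea377e6dabc59553ed90000001186330800032b74138be8f84c1cbc9f570000003e2a8bd40002fa4dab923a15b67574b8900000002975d4e4ccdc00023144530aaad97cea5300000034924d18a5e800066f6b5f322374b5328900000052f3c65757240000cfa38f57a4dd54e70b0000005e4fa1f1a859191800040f3ab42983ddf20000005a7496b314d717380003df154c73a9527600000026a481a37c6696d0000b5358be4d08d5240000004a91ce34fb91163a0f600019d6251a3c9700000055f664a79d3a9718ef400013932cfabb590000004c377c6963c319d671a000117d033b9ed00000002af2cc67ac5552beab8cce200017482e1400000050957cb574daa4a5937d49e000239c63310000003573662918656d9c239c3280002f6d5afa0000004836a1b2c7699a753269582b8dc0002ef10000004df186b155deebae3508be74cd80005b34000000569791e2aca72a49e51a56f0c68000621a0000005eb4d658f3bb4ccde957b8ebc5976c0000000000266fc5256d1254c3e6926ad0cdef9800000000005a444cd79bc2695cac4b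e6148ea34d000000000000000000000000000000000000000000000000000000000000000000000000000000000000000000000000000000000000000000000000000000000000000000000000000000000000000000000000000000000000000000000000000000000000000000000002c601ac2564507808c161606144e800000000006a04243523b18aa71c161a407728a60000000000094e509dc012e03621a07090c6c16300000001a1000000b46754d68290451126858d470000002d050000542dae20542040638004a091cd0000000c470000219cc82a5e00b5cd0b9e9020c5000000004501440000e60906b6e10458ce1335180000000d010a060002c26a80fac4af029a2b16350000002da76ace0000184144119982287004186c000000052e1b4c7b00000088511481724e0b0ccd00000014603b9061600005433986a019702321c700000032c2510a16a000000d230256609a14114500000044cb985245145500000102a42aa690c56600000020b05a9e300881300003048200dea5c0a80000001d434080b784b3900009964f58448028e300000041cc2802da8c53308d3000050820c7347500000008e8241b8898a1000250000d8110711a38000000180d10dc82b0959549200003138066950c00000006c028da478820b104f2b4600012e6258e000000306e1402b015c36140b0c0400014d9cdaa0000001522201c35052512861011c0002b27caaf0000004008989e76e0f86cde28200955400026aa00000018ec42921100020a54861cce6c800049ae00000009cd58406b22c640560709ac9bc0004d8f00000045501910d298682460a698a99c932980000000001cab538c888cce52ca71c50c6d6ad6000000000020c33b4b8ab1a729903a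e18e53d4e78000
def DT : ℕ := 0x88611888531d0952d843154c59d2800000000001844208cc42a4e8629652196a620e9000000000010c23104a6221275b1462918b5250700000004620000110d4b610a63a1274a0862a98b0000000823000030898a5988549d083a4a432d4c0000000c41000021856c514c4424e941cc52316a000000044308c40000e84a96c214ca62ce9410c50000000c2210460001274314b310ab5310749486000000086118820001093ad8a2988c5a928398a400000010c5531674a0000044308c44298e84a96c00000014865a9883a40000c2210466215274314b00000018a462d4941c000086118825311093ad8a0000001d28218aa62c23100000886a5b08531d0900000020e9290cb53041180001844c52cc42a4e800000025073148c5a8620800010c2b628a622127000000298b3a5043142218462000074254b610a60000002d4c41d252186110823000093a18a59885000000316a4a0e62904308c410000849d6c514c400000010a63a12a5b0862a98b3a5000002218462000000188549d0c52ca432d4c41d20000611082300000014c4424eb628c52316a4a0e00004308c41000000296c214c7424e9410c5531611880000443000000314b310a93a107494865a98208c0000c220000002d8a2988849d28398a462d4310400008610000001d0952d842994c59d28218a110c231000000000024e8629662156a620e9290c3088411800000000021275b1453118b52507314821846208000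
def WT : ℕ := 0x7354f215c5b5ccfb458d610d5aaa3700000000007bd8b6baf522ef6330d6239a73d4a50000000000194ed7c08d71c64756c5adecc63ef0000000096f0000e7364c3d2466be0c84d6611e7400000035e60000189d27d0633d36937168f495c60000001dae0000654594699427c9c2945f39d0ec000000394a3a5e0000d55dd6538ec928ece355f70000002a2c5c5600014e63df6238f615c55a92e700000014c521da0002e9b0ae9b55efa88eb5b4c40000005e6d24cecb540001ec5ceb2e2d58dbbb4400000015c56b1d666000058d5252f5bd0c7391b800000032d7ce68733000014a7adc636b6b671a8e0000005135d1d37be7460800009aabb64f47aecf00000058b156a42cdcc228000bd8fa7bf31349470000003cd33ac4a5beb79800038b57d5958c58d50000001ef69b27961485a66840000e7bef2938f60000004e946974ca9e6720ab700005209977e9af0000003dd11d1c623ed2b98720001499271b5f390000003aec7bda4ae2c3612a32e8a0002eeb37580000005483a3a2f1d8b6bc48fa15a0001d9cdead0000000d96290b5791ae1d757cbb20003576bd9600000049b2328d7baceb6bdf411c4aa580005b3900000058ee919e8d1977520eb9d9d75680004df20000001a674cd4b3dea132d21bd1efb500002ad50000005de77198d399cda4a952b0b59ca6fb80000000004cf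7324d6cc663758e375d896472b580000000001a949b664b38f2312d279eedbb9ec60000
def ET : ℕ := 0x952d8d73e11adaf9000000000000000000000000b4a9cc6c5f0bd6da000000000000000000000000a5a5ae6422fb5eba000000000000000000000000f8452a5b1aece35600000000000000000000000117c1695398dc6b3700000000000000000000000108bd4b4b5ccd6717000000000000000000000000c6b9f08a54bc6753000000000000000000000000e6362f82d2ad6334000000000000000000000000d732117a969ceb140000000000000000000000016ade72a671a635d00000000000000000000000015bda549e359731b10000000000000000000000017b569396b386b991000000000000000000000001395338d5ab783e2d0000000000000000000000012a4f1acd6f67c60e00000000000000000000000149cb59c5ed58c1ee0000000000000000000000019c6ad5bce547c22a0000000000000000000000018d66b7b4a938be0b000000000000000000000001ace2f6ad272845eb00000000000000000000000129d2b6be33a190a7000000000000000000000001494ef5b6b1928c880000000000000000000000013a4ad7ae758214680000000000000000000000018cea53a56d739904000000000000000000000001ac66929deb6320e50000000000000000000000019d627495af541cc50000000000000000000000015b5f19d4a7431d010000000000000000000000017adb58cd253418e20000000000000000000000016bd73ac4e923a0c2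

def ph (p x : X) : X := lk PT (p.val * 32 + x.val)
def Lp (x y : X) : X := lk LT (x.val * 32 + y.val)
def z28 (ε : Fin 2) (x y : X) : X := lk ZT ((ε.val * 32 + x.val) * 32 + y.val)
def d28 (x y : X) : X := lk DT (x.val * 32 + y.val)
def w28 (x z : X) : X := lk WT (x.val * 32 + z.val)
def f28 (x c : X) : X := lk ET (x.val * 32 + c.val)
def q28 (p x y : X) : X := ph p (Lp (ph p x) (ph p y))
def k28 (x : X) : Fin 9 := Fin.ofNat 9 (x.val / 3)
def l28 (x : X) : V := if x = 27 then 0 else Fin.ofNat 4 (x.val % 3 + 1)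
def e28 (k : Fin 9) (i : V) : X := if i = 0 then 27 else Fin.ofNat 28 (k.val * 3 + i.val - 1)

lemma ph_ph : ∀ p x, ph p (ph p x) = x := by decide +kernel
lemma ph_27 : ∀ x, ph 27 x = x := by decide +kernel
lemma ph_o : ∀ p, ph p 27 = p := by decide +kernel
lemma Lp_comm : ∀ x y, Lp x y = Lp y x := by decide +kernel
lemma Lp_27 : ∀ x, Lp 27 x = x := by decide +kernel
lemma Lp_inv : ∀ x y, Lp x (Lp x y) = y := by decide +kernel
lemma q28_swap' : ∀ x y, x < y → ∀ z, q28 x y z = q28 y x z := by decide +kernel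
lemma q28_swap (x y z : X) : q28 x y z = q28 y x z := by
  rcases lt_trichotomy x y with h | h | h
  · exact q28_swap' x y h z
  · rw [h]
  · exact (q28_swap' y x h z).symm

lemma q28_27 (x y : X) : q28 27 x y = Lp x y := by
  simp only [q28, ph_27]

lemma SQ28 : SQ q28 where
  c12 := q28_swap
  c23 x y z := by unfold q28; rw [Lp_comm]
  idem x y := by
    have h : ph x x = 27 := by rw [← ph_ph x 27, ph_o]
    unfold q28
    rw [h, Lp_27, ph_ph]
  inv x y z := by
    unfold q28
    rw [ph_ph, Lp_inv, ph_ph]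

lemma z28_third : ∀ (ε : Fin 2) (p r : X), p ≠ 27 → r ≠ 27 → k28 p ≠ k28 r →
    z28 ε p (q28 27 p r) = z28 ε p r := by decide +kernel
lemma z28_w : ∀ (ε : Fin 2) (p r : X), p ≠ 27 → r ≠ 27 → k28 p ≠ k28 r →
    r = w28 p (z28 ε p r) ∨ r = Lp p (w28 p (z28 ε p r)) := by decide +kernel
lemma z28_01 : ∀ (p r : X), p ≠ 27 → r ≠ 27 → k28 p ≠ k28 r →
    z28 0 p r ≠ z28 1 p r := by decide +kernel
lemma w28_z : ∀ (p z : X), p ≠ 27 → z ≠ 27 → k28 z ≠ k28 p →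
    w28 p z ≠ 27 ∧ k28 p ≠ k28 (w28 p z) ∧ (z28 0 p (w28 p z) = z ∨ z28 1 p (w28 p z) = z) := by
  decide +kernel

lemma two_of {p r r' w : X} (h : r = w ∨ r = Lp p w) (h' : r' = w ∨ r' = Lp p w) :
    r' = r ∨ r' = q28 27 p r := by
  rw [q28_27]
  rcases h with rfl | rfl <;> rcases h' with rfl | rfl
  · exact Or.inl rfl
  · exact Or.inr rfl
  · right; rw [Lp_inv]
  · exact Or.inl rfl

def Star28 : Star q28 27 where
  K := Fin 9
  e := e28
  κ := k28
  l := l28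
  zz := z28
  e0 := by decide +kernel
  ek := by decide +kernel
  el := by decide +kernel
  ke := by decide +kernel
  hom := by decide +kernel
  zs := by decide +kernel
  zt := z28_third
  zo := by decide +kernel
  zk := by decide +kernel
  ex p z hp hz h := by
    obtain ⟨h1, h2, h3⟩ := w28_z p z hp hz h
    rcases h3 with h3 | h3
    · exact ⟨_, 0, h1, h2, h3⟩
    · exact ⟨_, 1, h1, h2, h3⟩
  inj p r r' ε ε' hp hr hr' h h' hz := by
    have a := z28_w ε p r hp hr h
    have a' := z28_w ε' p r' hp hr' h'
    rw [← hz] at a'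
    have b := two_of a a'
    refine ⟨?_, b⟩
    have c : z28 ε' p r' = z28 ε' p r := by
      rcases b with b | b
      · rw [b]
      · rw [b, z28_third ε' p r hp hr h]
    rw [c] at hz
    have d := z28_01 p r hp hr h
    by_contra hne
    have : ε = 0 ∧ ε' = 1 ∨ ε = 1 ∧ ε' = 0 := by omega
    rcases this with ⟨rfl, rfl⟩ | ⟨rfl, rfl⟩
    · exact d hz
    · exact d hz.symm

def Rds28 : Rds q28 27 where
  C := X
  c := d28
  cs := by decide +kernel
  ct := by decide +kernel
  inj p r r' hp hr hr' h h' hz := by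
    have key : ∀ (p r : X), p ≠ 27 → r ≠ 27 → p ≠ r →
        r = f28 p (d28 p r) ∨ r = Lp p (f28 p (d28 p r)) := by decide +kernel
    have a := key p r hp hr h
    have a' := key p r' hp hr' h'
    rw [← hz] at a'
    exact two_of a a'
  ex := by
    have h1 : ∀ (p0 r0 : X), p0 ≠ 27 → r0 ≠ 27 → p0 ≠ r0 → (d28 p0 r0).val < 13 := by
      decide +kernel
    have h2 : ∀ (p : X) (c : Fin 13), p ≠ 27 →
        ∃ r, r ≠ 27 ∧ p ≠ r ∧ (d28 p r).val = c.val := by decide +kernel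
    intro p p0 r0 hp hp0 hr0 h
    obtain ⟨r, a, b, c⟩ := h2 p ⟨_, h1 p0 r0 hp0 hr0 h⟩ hp
    exact ⟨r, a, b, Fin.ext c⟩

def phE (p : X) : X ≃ X where
  toFun := ph p
  invFun := ph p
  left_inv := ph_ph p
  right_inv := ph_ph p

lemma phE_hom (p a b : X) : q28 p (phE p a) (phE p b) = phE p (q28 27 a b) := by
  simp only [phE, Equiv.coe_fn_mk, q28_27]
  simp only [q28, ph_ph]

lemma good28 : Good X q28 :=
  ⟨SQ28, fun o => ⟨Star28.map (phE o) (ph_o o) (phE_hom o)⟩⟩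

lemma rds28 (o : X) : Nonempty (Rds q28 o) := ⟨Rds28.map (phE o) (ph_o o) (phE_hom o)⟩

section conv
variable {α : Type} {q : α → α → α → α}

lemma SQ.qne (h : SQ q) {x y z : α} (hxy : x ≠ y) (hxz : x ≠ z) (hyz : y ≠ z) :
    q x y z ≠ x ∧ q x y z ≠ y ∧ q x y z ≠ z :=
  h.ne (o := x) y z hxy.symm hxz.symm hyz

def blk (f : α → ℕ) (q : α → α → α → α) (x y z : α) : Finset ℕ := {f x, f y, f z, f (q x y z)}

lemma blk_swap12 (h : SQ q) (f : α → ℕ) (x y z : α) : blk f q x y z = blk f q y x z := by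
  unfold blk; rw [h.c12 x y z]; ext a; simp only [Finset.mem_insert, Finset.mem_singleton]; tauto

lemma blk_swap23 (h : SQ q) (f : α → ℕ) (x y z : α) : blk f q x y z = blk f q x z y := by
  unfold blk; rw [h.c23 x y z]; ext a; simp only [Finset.mem_insert, Finset.mem_singleton]; tauto

lemma blk_q (h : SQ q) (f : α → ℕ) (x y z : α) : blk f q x y (q x y z) = blk f q x y z := by
  unfold blk; rw [h.inv x y z]; ext a; simp only [Finset.mem_insert, Finset.mem_singleton]; tauto

lemma mem_blk {f : α → ℕ} (hf : Function.Injective f) {x y z a : α} :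
    f a ∈ blk f q x y z ↔ a = x ∨ a = y ∨ a = z ∨ a = q x y z := by
  simp [blk, hf.eq_iff]

lemma blk_first (h : SQ q) {f : α → ℕ} (hf : Function.Injective f) {x y z a : α}
    (hxy : x ≠ y) (hxz : x ≠ z) (hyz : y ≠ z) (ha : f a ∈ blk f q x y z) :
    ∃ u v, a ≠ u ∧ a ≠ v ∧ u ≠ v ∧ blk f q x y z = blk f q a u v := by
  obtain ⟨h1, h2, h3⟩ := h.qne hxy hxz hyz
  rcases (mem_blk hf).1 ha with rfl | rfl | rfl | rfl
  · exact ⟨y, z, hxy, hxz, hyz, rfl⟩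
  · exact ⟨x, z, hxy.symm, hyz, hxz, blk_swap12 h f _ _ _⟩
  · exact ⟨x, y, hxz.symm, hyz.symm, hxy, by rw [blk_swap23 h, blk_swap12 h]⟩
  · exact ⟨x, y, h1, h2, hxy, by rw [← blk_q h, blk_swap23 h, blk_swap12 h]⟩

lemma blk_second (h : SQ q) {f : α → ℕ} (hf : Function.Injective f) {x y z b : α}
    (hxy : x ≠ y) (hxz : x ≠ z) (hyz : y ≠ z) (hb : f b ∈ blk f q x y z) (hne : b ≠ x) :
    ∃ v, x ≠ v ∧ b ≠ v ∧ blk f q x y z = blk f q x b v := by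
  obtain ⟨h1, h2, h3⟩ := h.qne hxy hxz hyz
  rcases (mem_blk hf).1 hb with rfl | rfl | rfl | rfl
  · exact absurd rfl hne
  · exact ⟨z, hxz, hyz, rfl⟩
  · exact ⟨y, hxy, hyz.symm, blk_swap23 h f _ _ _⟩
  · exact ⟨y, hxy, h2, by rw [← blk_q h, blk_swap23 h]⟩

lemma blk_third (h : SQ q) {f : α → ℕ} (hf : Function.Injective f) {x y z c : α}
    (hc : f c ∈ blk f q x y z) (hx : c ≠ x) (hy : c ≠ y) :
    blk f q x y z = blk f q x y c := by
  rcases (mem_blk hf).1 hc with rfl | rfl | rfl | rfl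
  · exact absurd rfl hx
  · exact absurd rfl hy
  · rfl
  · exact (blk_q h f _ _ _).symm

lemma blk_all (h : SQ q) {f : α → ℕ} (hf : Function.Injective f) {x y z a b c : α}
    (hxy : x ≠ y) (hxz : x ≠ z) (hyz : y ≠ z)
    (ha : f a ∈ blk f q x y z) (hb : f b ∈ blk f q x y z) (hc : f c ∈ blk f q x y z)
    (hab : a ≠ b) (hac : a ≠ c) (hbc : b ≠ c) : blk f q x y z = blk f q a b c := by
  obtain ⟨u, v, h1, h2, h3, e⟩ := blk_first h hf hxy hxz hyz ha
  rw [e] at hb hc ⊢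
  obtain ⟨w, h4, h5, e2⟩ := blk_second h hf h1 h2 h3 hb hab.symm
  rw [e2] at hc ⊢
  exact blk_third h hf hc hac.symm hbc.symm

def tri (f : α → ℕ) (q : α → α → α → α) (o p r : α) : Finset ℕ := {f p, f r, f (q o p r)}

lemma mem_tri {f : α → ℕ} (hf : Function.Injective f) {o p r a : α} :
    f a ∈ tri f q o p r ↔ a = p ∨ a = r ∨ a = q o p r := by
  simp [tri, hf.eq_iff]

lemma tri_swap (h : SQ q) (f : α → ℕ) (o p r : α) : tri f q o p r = tri f q o r p := by
  unfold tri; rw [h.c23 o p r]; ext a; simp only [Finset.mem_insert, Finset.mem_singleton]; tauto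

lemma tri_q (h : SQ q) (f : α → ℕ) (o p r : α) : tri f q o p (q o p r) = tri f q o p r := by
  unfold tri; rw [h.inv]; ext a; simp only [Finset.mem_insert, Finset.mem_singleton]; tauto

lemma erase_blk (h : SQ q) {f : α → ℕ} (hf : Function.Injective f) {o p r : α}
    (hp : p ≠ o) (hr : r ≠ o) (hpr : p ≠ r) : (blk f q o p r).erase (f o) = tri f q o p r := by
  obtain ⟨h1, h2, h3⟩ := h.ne p r hp hr hpr
  unfold blk
  rw [Finset.erase_insert]
  · rfl
  · simp [hf.eq_iff, hp.symm, hr.symm, h1.symm]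

lemma tri_point (h : SQ q) {f : α → ℕ} (hf : Function.Injective f) {o p r a : α} (R : Rds q o)
    (hp : p ≠ o) (hr : r ≠ o) (hpr : p ≠ r) (ha : f a ∈ tri f q o p r) :
    ∃ s, s ≠ o ∧ a ≠ s ∧ R.c a s = R.c p r ∧ tri f q o a s = tri f q o p r := by
  obtain ⟨h1, h2, h3⟩ := h.ne p r hp hr hpr
  rcases (mem_tri hf).1 ha with rfl | rfl | rfl
  · exact ⟨r, hr, hpr, rfl, rfl⟩
  · exact ⟨p, hp, hpr.symm, (R.cs _ _ hp hr hpr).symm, tri_swap h _ _ _ _⟩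
  · refine ⟨p, hp, h2, ?_, ?_⟩
    · rw [R.cs _ _ h1 hp h2, R.ct _ _ hp hr hpr]
    · rw [tri_swap h, tri_q h]

lemma tri_color (h : SQ q) {f : α → ℕ} (hf : Function.Injective f) {o p r p' r' : α} (R : Rds q o)
    (hp : p ≠ o) (hr : r ≠ o) (hpr : p ≠ r) (hp' : p' ≠ o) (hr' : r' ≠ o) (hpr' : p' ≠ r')
    (e : tri f q o p r = tri f q o p' r') : R.c p r = R.c p' r' := by
  have h1 : f p ∈ tri f q o p' r' := by rw [← e]; simp [tri]
  obtain ⟨s, hs, hps, hc, ht⟩ := tri_point h hf R hp' hr' hpr' h1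
  have h2 : f r ∈ tri f q o p s := by rw [ht, ← e]; simp [tri]
  rw [← hc]
  rcases (mem_tri hf).1 h2 with rfl | rfl | rfl
  · exact absurd rfl hpr
  · rfl
  · exact R.ct _ _ hp hs hps

lemma conv [Fintype α] (h : SQ q) (hR : ∀ o, Nonempty (Rds q o)) :
    ExistsRDSQS (Fintype.card α) := by
  classical
  obtain ⟨f, hf⟩ : ∃ f : α → ℕ, Function.Injective f :=
    ⟨fun a => (Fintype.equivFin α a : ℕ), fun a b hab =>
      (Fintype.equivFin α).injective (Fin.ext hab)⟩
  let X : Finset ℕ := Finset.univ.image f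
  let B : Finset (Finset ℕ) :=
    (Finset.univ.filter fun t : α × α × α => t.1 ≠ t.2.1 ∧ t.1 ≠ t.2.2 ∧ t.2.1 ≠ t.2.2).image
      fun t => blk f q t.1 t.2.1 t.2.2
  have hX : ∀ n, n ∈ X ↔ ∃ a, f a = n := by intro n; simp [X]
  have hB : ∀ b, b ∈ B ↔ ∃ x y z, x ≠ y ∧ x ≠ z ∧ y ≠ z ∧ blk f q x y z = b := by
    intro b
    simp only [B, Finset.mem_image, Finset.mem_filter, Finset.mem_univ, true_and, Prod.exists]
    constructor
    · rintro ⟨x, y, z, ⟨h1, h2, h3⟩, h4⟩; exact ⟨x, y, z, h1, h2, h3, h4⟩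
    · rintro ⟨x, y, z, h1, h2, h3, h4⟩; exact ⟨x, y, z, ⟨h1, h2, h3⟩, h4⟩
  refine ⟨X, B, ⟨?_, ?_, ?_⟩, ?_⟩
  · rw [Finset.card_image_of_injective _ hf, Finset.card_univ]
  · intro b hb
    obtain ⟨x, y, z, hxy, hxz, hyz, rfl⟩ := (hB b).1 hb
    obtain ⟨h1, h2, h3⟩ := h.qne hxy hxz hyz
    constructor
    · intro n hn
      simp only [blk, Finset.mem_insert, Finset.mem_singleton] at hn
      rw [hX]
      rcases hn with rfl | rfl | rfl | rfl <;> exact ⟨_, rfl⟩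
    · unfold blk
      rw [Finset.card_eq_succ]
      refine ⟨f x, {f y, f z, f (q x y z)}, ?_, rfl, ?_⟩
      · simp [hf.eq_iff, hxy, hxz, h1.symm]
      · exact Finset.card_eq_three.2 ⟨_, _, _, hf.ne hyz, hf.ne h2.symm, hf.ne h3.symm, rfl⟩
  · intro T hT hc
    obtain ⟨a', b', c', hab, hac, hbc, rfl⟩ := Finset.card_eq_three.1 hc
    obtain ⟨a, rfl⟩ := (hX a').1 (hT (by simp))
    obtain ⟨b, rfl⟩ := (hX b').1 (hT (by simp))
    obtain ⟨c, rfl⟩ := (hX c').1 (hT (by simp))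
    rw [hf.ne_iff] at hab hac hbc
    refine ⟨blk f q a b c, ⟨(hB _).2 ⟨a, b, c, hab, hac, hbc, rfl⟩, ?_⟩, ?_⟩
    · intro n hn
      simp only [blk, Finset.mem_insert, Finset.mem_singleton] at hn ⊢
      tauto
    · rintro d ⟨hd, hsub⟩
      obtain ⟨x, y, z, hxy, hxz, hyz, rfl⟩ := (hB d).1 hd
      exact blk_all h hf hxy hxz hyz (hsub (by simp)) (hsub (by simp)) (hsub (by simp)) hab hac hbc
  · intro n hn
    obtain ⟨o, rfl⟩ := (hX n).1 hn
    obtain ⟨R⟩ := hR o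
    have hD : ∀ b, b ∈ derivedBlocks B (f o) ↔
        ∃ p r, p ≠ o ∧ r ≠ o ∧ p ≠ r ∧ tri f q o p r = b := by
      intro b
      simp only [derivedBlocks, Finset.mem_image, Finset.mem_filter]
      constructor
      · rintro ⟨d, ⟨hd, ho⟩, rfl⟩
        obtain ⟨x, y, z, hxy, hxz, hyz, rfl⟩ := (hB d).1 hd
        obtain ⟨u, v, h1, h2, h3, e⟩ := blk_first h hf hxy hxz hyz ho
        exact ⟨u, v, h1.symm, h2.symm, h3, by rw [e, erase_blk h hf h1.symm h2.symm h3]⟩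
      · rintro ⟨p, r, hp, hr, hpr, rfl⟩
        exact ⟨blk f q o p r, ⟨(hB _).2 ⟨o, p, r, hp.symm, hr.symm, hpr, rfl⟩, by simp [blk]⟩,
          erase_blk h hf hp hr hpr⟩
    let VP : Finset (α × α) :=
      Finset.univ.filter fun t => t.1 ≠ o ∧ t.2 ≠ o ∧ t.1 ≠ t.2
    let Col : Finset R.C := VP.image fun t => R.c t.1 t.2
    have hVP : ∀ p r, (p, r) ∈ VP ↔ p ≠ o ∧ r ≠ o ∧ p ≠ r := by intro p r; simp [VP]
    let E := Col.equivFin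
    let P : Fin Col.card → Finset (Finset ℕ) := fun i =>
      (VP.filter fun t => R.c t.1 t.2 = (E.symm i : R.C)).image fun t => tri f q o t.1 t.2
    have hP : ∀ i b, b ∈ P i ↔ ∃ p r, p ≠ o ∧ r ≠ o ∧ p ≠ r ∧ R.c p r = (E.symm i : R.C) ∧
        tri f q o p r = b := by
      intro i b
      simp only [P, Finset.mem_image, Finset.mem_filter, Prod.exists, hVP]
      constructor
      · rintro ⟨p, r, ⟨⟨h1, h2, h3⟩, h4⟩, h5⟩; exact ⟨p, r, h1, h2, h3, h4, h5⟩
      · rintro ⟨p, r, h1, h2, h3, h4, h5⟩; exact ⟨p, r, ⟨⟨h1, h2, h3⟩, h4⟩, h5⟩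
    refine ⟨Col.card, P, fun i => ⟨?_, ?_⟩, ?_, ?_⟩
    · intro b hb
      obtain ⟨p, r, hp, hr, hpr, hc, rfl⟩ := (hP i b).1 hb
      obtain ⟨h1, h2, h3⟩ := h.ne p r hp hr hpr
      intro m hm
      simp only [tri, Finset.mem_insert, Finset.mem_singleton] at hm
      rw [Finset.mem_erase, hX]
      rcases hm with rfl | rfl | rfl
      · exact ⟨hf.ne hp, _, rfl⟩
      · exact ⟨hf.ne hr, _, rfl⟩
      · exact ⟨hf.ne h1, _, rfl⟩
    · intro y hy
      rw [Finset.mem_erase, hX] at hy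
      obtain ⟨hy, p, rfl⟩ := hy
      rw [hf.ne_iff] at hy
      obtain ⟨⟨p0, r0⟩, hm, hcol⟩ := Finset.mem_image.1 (E.symm i).2
      obtain ⟨h1, h2, h3⟩ := (hVP _ _).1 hm
      obtain ⟨r, hr, hpr, hc⟩ := R.ex p p0 r0 hy h1 h2 h3
      refine ⟨tri f q o p r, ⟨(hP _ _).2 ⟨p, r, hy, hr, hpr, hc.trans hcol, rfl⟩,
        by simp [tri]⟩, ?_⟩
      rintro b ⟨hb, hpb⟩
      obtain ⟨p', r', hp', hr', hpr', hc', rfl⟩ := (hP i b).1 hb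
      obtain ⟨s, hs, hps, hcs, ht⟩ := tri_point h hf R hp' hr' hpr' hpb
      rw [← ht]
      rcases R.inj p r s hy hr hs hpr hps
        ((hc.trans hcol).trans (hcs.trans hc').symm) with rfl | rfl
      · rfl
      · exact tri_q h f o p r
    · intro i b hb
      obtain ⟨p, r, hp, hr, hpr, hc, rfl⟩ := (hP i b).1 hb
      exact (hD _).2 ⟨p, r, hp, hr, hpr, rfl⟩
    · intro b hb
      obtain ⟨p, r, hp, hr, hpr, rfl⟩ := (hD b).1 hb
      have hcm : R.c p r ∈ Col :=
        Finset.mem_image.2 ⟨(p, r), (hVP p r).2 ⟨hp, hr, hpr⟩, rfl⟩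
      refine ⟨E ⟨R.c p r, hcm⟩, (hP _ _).2 ⟨p, r, hp, hr, hpr, by simp, rfl⟩, ?_⟩
      intro j hj
      obtain ⟨p', r', hp', hr', hpr', hc, e⟩ := (hP _ _).1 hj
      have := tri_color h hf R hp' hr' hpr' hp hr hpr e
      rw [← Equiv.symm_apply_eq]
      exact Subtype.ext (hc.symm.trans this)

end conv

lemma exists_good (m : ℕ) : ∃ (α : Type) (_ : Fintype α) (q : α → α → α → α),
    Good α q ∧ Fintype.card α = 28 * 4 ^ m := by
  induction m with
  | zero => exact ⟨X, inferInstanceAs (Fintype (Fin 28)), q28, good28, by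
      rw [show Fintype.card X = 28 from Fintype.card_fin 28]; norm_num⟩
  | succ m ih =>
    obtain ⟨α, i, q, hg, hc⟩ := ih
    letI : Fintype V := inferInstanceAs (Fintype (Fin 4))
    refine ⟨α × V, inferInstance, pq q, hg.prod, ?_⟩
    rw [Fintype.card_prod, hc, show Fintype.card V = 4 from Fintype.card_fin 4, pow_succ, mul_assoc]

lemma main (n : ℕ) (hn : 0 < n) : ExistsRDSQS (7 * 4 ^ n) := by
  obtain ⟨n, rfl⟩ : ∃ k, n = k + 1 := ⟨n - 1, by omega⟩
  rcases n with _ | m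
  · letI : Fintype X := inferInstanceAs (Fintype (Fin 28))
    have := conv SQ28 rds28
    rw [show Fintype.card X = 28 from Fintype.card_fin 28] at this
    exact this
  · obtain ⟨α, i, q, hg, hc⟩ := exists_good m
    letI : Fintype V := inferInstanceAs (Fintype (Fin 4))
    have := conv (pq_SQ hg.1) hg.rds
    rw [Fintype.card_prod, hc, show Fintype.card V = 4 from Fintype.card_fin 4] at this
    rw [show 7 * 4 ^ (m + 1 + 1) = 28 * 4 ^ m * 4 by ring]
    exact this

end RD

/-- For every positive integer n, there exists an RDSQS(7·4^n). -/
theorem stmt_14 (n : ℕ) (hn : 0 < n) : ExistsRDSQS (7 * 4 ^ n) := RD.main n hn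
end

section
/- Let u and v be positive integers. If there exist an RDSQS(u + 1) and an RDSQS(v + 1), then there exists an RDSQS(uv + 1). -/
open Finset

open Finset

namespace RDP

structure IsRD {α Γ : Type} (B : Set (Finset α)) (c : α → Finset α → Γ) : Prop where
  card : ∀ b ∈ B, b.card = 4
  tri : ∀ x y z, x ≠ y → x ≠ z → y ≠ z → ∃ b, b ∈ B ∧ x ∈ b ∧ y ∈ b ∧ z ∈ b
  uniq : ∀ x y z, x ≠ y → x ≠ z → y ≠ z → ∀ b ∈ B, ∀ b' ∈ B, x ∈ b → y ∈ b → z ∈ b →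
    x ∈ b' → y ∈ b' → z ∈ b' → b = b'
  col : ∀ x y, x ≠ y → ∀ b ∈ B, x ∈ b → ∃ b', b' ∈ B ∧ x ∈ b' ∧ y ∈ b' ∧ c x b' = c x b
  colu : ∀ x y, x ≠ y → ∀ b ∈ B, ∀ b' ∈ B, x ∈ b → y ∈ b → x ∈ b' → y ∈ b' →
    c x b = c x b' → b = b'

def pr {A G : Type} (x : Option (A × G)) : Option A := x.map Prod.fst
def p2 {A G : Type} (x : Option (A × G)) : Option G := x.map Prod.snd

def Near {A G : Type} (x y : Option (A × G)) : Prop := pr x = none ∨ pr y = none ∨ pr x = pr y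

def Scope {A G : Type} (b : Finset (Option A)) (x y z : Option (A × G)) : Prop :=
  pr x ∈ b ∧ pr y ∈ b ∧ pr z ∈ b ∧ ¬ (Near x y ∧ Near x z ∧ Near y z) ∧
    (none ∈ b ∨ (pr x ≠ pr y ∧ pr x ≠ pr z ∧ pr y ≠ pr z))

structure IsIng {A G Γ : Type} (b : Finset (Option A)) (D : Set (Finset (Option (A × G))))
    (γ : Option (A × G) → Finset (Option (A × G)) → G ⊕ Γ) (used : Option G → Γ → Prop) :
    Prop where
  card : ∀ B ∈ D, B.card = 4
  sc : ∀ B ∈ D, ∀ x ∈ B, ∀ y ∈ B, ∀ z ∈ B, x ≠ y → x ≠ z → y ≠ z → Scope b x y z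
  tri : ∀ x y z, x ≠ y → x ≠ z → y ≠ z → Scope b x y z → ∃ B, B ∈ D ∧ x ∈ B ∧ y ∈ B ∧ z ∈ B
  uniq : ∀ x y z, x ≠ y → x ≠ z → y ≠ z → ∀ B ∈ D, ∀ B' ∈ D, x ∈ B → y ∈ B → z ∈ B →
    x ∈ B' → y ∈ B' → z ∈ B' → B = B'
  full : ∀ x y, x ≠ y → pr x ∈ b → pr y ∈ b → (none ∈ b ∨ pr x ≠ pr y) → ∀ t,
    ∃ B, B ∈ D ∧ x ∈ B ∧ y ∈ B ∧ γ x B = Sum.inl t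
  colu : ∀ x y, x ≠ y → ∀ B ∈ D, ∀ B' ∈ D, x ∈ B → y ∈ B → x ∈ B' → y ∈ B' →
    γ x B = γ x B' → B = B'
  hole1 : ∀ B ∈ D, ∀ x ∈ B, ∀ σ, γ x B = Sum.inr σ →
    none ∈ b ∧ used (p2 x) σ ∧ ∀ y ∈ B, y ≠ x → ¬ Near x y
  hole2 : none ∈ b → ∀ x y, pr x ∈ b → pr y ∈ b → ¬ Near x y → ∀ σ, used (p2 x) σ →
    ∃ B, B ∈ D ∧ x ∈ B ∧ y ∈ B ∧ γ x B = Sum.inr σ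

def used {α Γ : Type} (B : Set (Finset α)) (c : α → Finset α → Γ) (x : α) (σ : Γ) : Prop :=
  ∃ d ∈ B, x ∈ d ∧ c x d = σ

/-- group lift -/
def gl {A G : Type} (a : A) : Option G ↪ Option (A × G) :=
  ⟨Option.map (fun g => (a, g)), Option.map_injective (fun _ _ h => by simpa using h)⟩

/-- row lift -/
def rl {A G : Type} (g : G) : Option A ↪ Option (A × G) :=
  ⟨Option.map (fun a => (a, g)), Option.map_injective (fun _ _ h => by simpa using h)⟩

@[simp] lemma p2_gl {A G : Type} (a : A) (x : Option G) : p2 (gl a x) = x := by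
  cases x <;> rfl
@[simp] lemma pr_rl {A G : Type} (g : G) (x : Option A) : pr (rl g x) = x := by
  cases x <;> rfl
lemma pr_gl {A G : Type} (a : A) (x : Option G) : pr (gl a x) = none ∨ pr (gl a x) = some a := by
  cases x <;> simp [pr, gl]

lemma pr_none {A G : Type} {x : Option (A × G)} : pr x = none ↔ x = none := by
  cases x <;> simp [pr]

lemma ext2 {A G : Type} {x y : Option (A × G)} (h1 : pr x = pr y) (h2 : p2 x = p2 y) : x = y := by
  cases x <;> cases y <;> simp_all [pr, p2, Prod.ext_iff]

lemma p2_ne {A G : Type} {x y : Option (A × G)} (h : x ≠ y) (hn : Near x y) : p2 x ≠ p2 y := by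
  intro h2
  rcases x with _ | ⟨a, i⟩ <;> rcases y with _ | ⟨b, j⟩ <;> simp_all [pr, p2, Near]

lemma near_group {A G : Type} {x y : Option (A × G)} (h : x ≠ y) (hn : Near x y) :
    ∃ a, gl a (p2 x) = x ∧ gl a (p2 y) = y := by
  rcases x with _ | ⟨a, i⟩ <;> rcases y with _ | ⟨b, j⟩ <;> simp_all [pr, p2, Near, gl]

lemma near3_group {A G : Type} {x y z : Option (A × G)} (h : x ≠ y) (hn : Near x y)
    (h2 : Near x z) (h3 : Near y z) :
    ∃ a, gl a (p2 x) = x ∧ gl a (p2 y) = y ∧ gl a (p2 z) = z := by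
  rcases x with _ | ⟨a, i⟩ <;> rcases y with _ | ⟨b, j⟩ <;> rcases z with _ | ⟨c, k⟩ <;>
    simp_all [pr, p2, Near, gl]

lemma near_gl {A G : Type} (a : A) (x y : Option G) : Near (gl a x) (gl a y) := by
  cases x <;> cases y <;> simp [pr, gl, Near]

lemma gl_unique {A G : Type} {a a' : A} {x y x' y' : Option G} (h : x ≠ y)
    (h1 : gl a x = gl a' x') (h2 : gl a y = gl a' y') : a = a' ∧ x = x' ∧ y = y' := by
  cases x <;> cases y <;> cases x' <;> cases y' <;> simp_all [gl]

lemma ex2 {α : Type} {B : Finset α} (h : B.card = 4) {x : α} (_ : x ∈ B) (y : α) (_ : y ∈ B) :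
    ∃ z ∈ B, z ≠ x ∧ z ≠ y := by
  classical
  have : 0 < ((B.erase x).erase y).card := by
    have := Finset.pred_card_le_card_erase (s := B) (a := x)
    have := Finset.pred_card_le_card_erase (s := B.erase x) (a := y)
    omega
  obtain ⟨z, hz⟩ := Finset.card_pos.mp this
  simp at hz
  exact ⟨z, hz.2.2, hz.2.1, hz.1⟩

section prod
variable {A G ΓV ΓU : Type} {BV : Set (Finset (Option A))} {cV : Option A → Finset (Option A) → ΓV}
  {BU : Set (Finset (Option G))} {cU : Option G → Finset (Option G) → ΓU}
  {D : Finset (Option A) → Set (Finset (Option (A × G)))}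
  {γ : Finset (Option A) → Option (A × G) → Finset (Option (A × G)) → G ⊕ ΓU}

def PB (BV : Set (Finset (Option A))) (BU : Set (Finset (Option G)))
    (D : Finset (Option A) → Set (Finset (Option (A × G)))) : Set (Finset (Option (A × G))) :=
  {B | (∃ b ∈ BV, B ∈ D b) ∨ ∃ a, ∃ d ∈ BU, B = d.map (gl a)}

open Classical in
noncomputable def pc (BV : Set (Finset (Option A))) (cV : Option A → Finset (Option A) → ΓV)
    (cU : Option G → Finset (Option G) → ΓU)
    (D : Finset (Option A) → Set (Finset (Option (A × G))))
    (γ : Finset (Option A) → Option (A × G) → Finset (Option (A × G)) → G ⊕ ΓU)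
    (x : Option (A × G)) (B : Finset (Option (A × G))) : (ΓV × G) ⊕ ΓU :=
  if h : ∃ b ∈ BV, B ∈ D b then
    match γ h.choose x B with
    | Sum.inl t => Sum.inl (cV (pr x) h.choose, t)
    | Sum.inr σ => Sum.inr σ
  else Sum.inr (cU (p2 x) (B.image p2))

lemma scope_ex (hV : IsRD BV cV) {x y z : Option (A × G)} (h1 : x ≠ y) (h2 : x ≠ z) (h3 : y ≠ z)
    (hN : ¬ (Near x y ∧ Near x z ∧ Near y z)) : ∃ b ∈ BV, Scope b x y z := by
  have hx := pr_none (x := x)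
  have hy := pr_none (x := y)
  have hz := pr_none (x := z)
  unfold Scope
  unfold Near at *
  by_cases e1 : pr x = pr y
  · have := hV.tri none (pr x) (pr z)
    grind
  by_cases e2 : pr x = pr z
  · have := hV.tri none (pr x) (pr y)
    grind
  by_cases e3 : pr y = pr z
  · have := hV.tri none (pr x) (pr y)
    grind
  have := hV.tri (pr x) (pr y) (pr z)
  grind

lemma scope_uniq (hV : IsRD BV cV) {x y z : Option (A × G)} (h1 : x ≠ y) (h2 : x ≠ z) (h3 : y ≠ z)
    {b b' : Finset (Option A)} (hb : b ∈ BV) (hb' : b' ∈ BV) (h : Scope b x y z)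
    (h' : Scope b' x y z) : b = b' := by
  have := hV.uniq (pr x) (pr y) (pr z)
  have := hV.uniq none (pr x) (pr y)
  have := hV.uniq none (pr x) (pr z)
  have := hV.uniq none (pr y) (pr z)
  have hx := pr_none (x := x)
  have hy := pr_none (x := y)
  have hz := pr_none (x := z)
  unfold Scope at *
  unfold Near at *
  grind

lemma blk_uniq (hV : IsRD BV cV) (hI : ∀ b ∈ BV, IsIng b (D b) (γ b) (used BU cU))
    {b b' : Finset (Option A)} (hb : b ∈ BV) (hb' : b' ∈ BV) {B : Finset (Option (A × G))}
    (h : B ∈ D b) (h' : B ∈ D b') : b = b' := by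
  have hc := (hI b hb).card B h
  obtain ⟨x, hx⟩ := Finset.card_pos.mp (by omega : 0 < B.card)
  obtain ⟨y, hy, hxy, -⟩ := ex2 hc hx x hx
  obtain ⟨z, hz, hxz, hyz⟩ := ex2 hc hx y hy
  exact scope_uniq hV hxy.symm hxz.symm hyz.symm hb hb'
    ((hI b hb).sc B h x hx y hy z hz hxy.symm hxz.symm hyz.symm)
    ((hI b' hb').sc B h' x hx y hy z hz hxy.symm hxz.symm hyz.symm)

lemma pc_inl (hV : IsRD BV cV) (hI : ∀ b ∈ BV, IsIng b (D b) (γ b) (used BU cU))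
    {b : Finset (Option A)} (hb : b ∈ BV) {B : Finset (Option (A × G))}
    (h : B ∈ D b) {x : Option (A × G)} {t : G} (hg : γ b x B = Sum.inl t) :
    pc BV cV cU D γ x B = Sum.inl (cV (pr x) b, t) := by
  have hex : ∃ b ∈ BV, B ∈ D b := ⟨b, hb, h⟩
  have he : hex.choose = b := blk_uniq hV hI hex.choose_spec.1 hb hex.choose_spec.2 h
  unfold pc
  rw [dif_pos hex, he, hg]

lemma pc_inr (hV : IsRD BV cV) (hI : ∀ b ∈ BV, IsIng b (D b) (γ b) (used BU cU))
    {b : Finset (Option A)} (hb : b ∈ BV) {B : Finset (Option (A × G))}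
    (h : B ∈ D b) {x : Option (A × G)} {σ : ΓU} (hg : γ b x B = Sum.inr σ) :
    pc BV cV cU D γ x B = Sum.inr σ := by
  have hex : ∃ b ∈ BV, B ∈ D b := ⟨b, hb, h⟩
  have he : hex.choose = b := blk_uniq hV hI hex.choose_spec.1 hb hex.choose_spec.2 h
  unfold pc
  rw [dif_pos hex, he, hg]

lemma fill_not (hU : IsRD BU cU) (hI : ∀ b ∈ BV, IsIng b (D b) (γ b) (used BU cU))
    {a : A} {d : Finset (Option G)} (hd : d ∈ BU) : ¬ ∃ b ∈ BV, d.map (gl a) ∈ D b := by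
  rintro ⟨b, hb, h⟩
  have hc := hU.card d hd
  obtain ⟨x, hx⟩ := Finset.card_pos.mp (by omega : 0 < d.card)
  obtain ⟨y, hy, hxy, -⟩ := ex2 hc hx x hx
  obtain ⟨z, hz, hxz, hyz⟩ := ex2 hc hx y hy
  have := (hI b hb).sc _ h (gl a x) (mem_map_of_mem _ hx) (gl a y) (mem_map_of_mem _ hy)
    (gl a z) (mem_map_of_mem _ hz) (by simpa using hxy.symm) (by simpa using hxz.symm)
    (by simpa using hyz.symm)
  exact this.2.2.2.1 ⟨near_gl _ _ _, near_gl _ _ _, near_gl _ _ _⟩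

lemma pc_fill (hU : IsRD BU cU) (hI : ∀ b ∈ BV, IsIng b (D b) (γ b) (used BU cU))
    {a : A} {d : Finset (Option G)} (hd : d ∈ BU) (x : Option (A × G)) :
    pc BV cV cU D γ x (d.map (gl a)) = Sum.inr (cU (p2 x) d) := by
  classical
  unfold pc
  rw [dif_neg (fill_not hU hI hd)]
  congr 2
  ext y
  simp

/-- case analysis on a block and its colour -/
lemma pc_cases (hV : IsRD BV cV) (hU : IsRD BU cU)
    (hI : ∀ b ∈ BV, IsIng b (D b) (γ b) (used BU cU))
    {B : Finset (Option (A × G))} (hB : B ∈ PB BV BU D) (x : Option (A × G)) :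
    (∃ b ∈ BV, B ∈ D b ∧ ∃ t, γ b x B = Sum.inl t ∧
      pc BV cV cU D γ x B = Sum.inl (cV (pr x) b, t)) ∨
    (∃ b ∈ BV, B ∈ D b ∧ ∃ σ, γ b x B = Sum.inr σ ∧ pc BV cV cU D γ x B = Sum.inr σ) ∨
    (∃ a, ∃ d ∈ BU, B = d.map (gl a) ∧ pc BV cV cU D γ x B = Sum.inr (cU (p2 x) d)) := by
  rcases hB with ⟨b, hb, h⟩ | ⟨a, d, hd, rfl⟩
  · rcases hg : γ b x B with t | σ
    · exact Or.inl ⟨b, hb, h, t, hg, pc_inl hV hI hb h hg⟩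
    · exact Or.inr (Or.inl ⟨b, hb, h, σ, hg, pc_inr hV hI hb h hg⟩)
  · exact Or.inr (Or.inr ⟨a, d, hd, rfl, pc_fill hU hI hd x⟩)

lemma fill_mem {a : A} {d : Finset (Option G)} {x : Option (A × G)} (h : x ∈ d.map (gl a)) :
    p2 x ∈ d ∧ gl a (p2 x) = x := by
  obtain ⟨y, hy, rfl⟩ := Finset.mem_map.mp h
  simpa using hy

theorem prod_RD (hV : IsRD BV cV) (hU : IsRD BU cU)
    (hI : ∀ b ∈ BV, IsIng b (D b) (γ b) (used BU cU)) :
    IsRD (PB BV BU D) (pc BV cV cU D γ) := by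
  refine ⟨?_, ?_, ?_, ?_, ?_⟩
  · rintro B (⟨b, hb, h⟩ | ⟨a, d, hd, rfl⟩)
    · exact (hI b hb).card B h
    · rw [Finset.card_map]; exact hU.card d hd
  · intro x y z h1 h2 h3
    by_cases hN : Near x y ∧ Near x z ∧ Near y z
    · obtain ⟨a, ha, hb, hc⟩ := near3_group h1 hN.1 hN.2.1 hN.2.2
      obtain ⟨d, hd, hx, hy, hz⟩ := hU.tri (p2 x) (p2 y) (p2 z) (p2_ne h1 hN.1) (p2_ne h2 hN.2.1)
        (p2_ne h3 hN.2.2)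
      refine ⟨d.map (gl a), Or.inr ⟨a, d, hd, rfl⟩, ?_, ?_, ?_⟩
      · rw [← ha]; exact mem_map_of_mem _ hx
      · rw [← hb]; exact mem_map_of_mem _ hy
      · rw [← hc]; exact mem_map_of_mem _ hz
    · obtain ⟨b, hb, hs⟩ := scope_ex hV h1 h2 h3 hN
      obtain ⟨B, hB, h⟩ := (hI b hb).tri x y z h1 h2 h3 hs
      exact ⟨B, Or.inl ⟨b, hb, hB⟩, h⟩
  · intro x y z h1 h2 h3 B hB B' hB' hx hy hz hx' hy' hz'
    rcases hB with ⟨b, hb, h⟩ | ⟨a, d, hd, rfl⟩ <;> rcases hB' with ⟨b', hb', h'⟩ | ⟨a', d', hd', rfl⟩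
    · have hs := (hI b hb).sc B h x hx y hy z hz h1 h2 h3
      have hs' := (hI b' hb').sc B' h' x hx' y hy' z hz' h1 h2 h3
      obtain rfl := scope_uniq hV h1 h2 h3 hb hb' hs hs'
      exact (hI b hb).uniq x y z h1 h2 h3 B h B' h' hx hy hz hx' hy' hz'
    · have hs := (hI b hb).sc B h x hx y hy z hz h1 h2 h3
      obtain ⟨-, e1⟩ := fill_mem hx'
      obtain ⟨-, e2⟩ := fill_mem hy'
      obtain ⟨-, e3⟩ := fill_mem hz'
      rw [← e1, ← e2, ← e3] at hs
      exact absurd ⟨near_gl _ _ _, near_gl _ _ _, near_gl _ _ _⟩ hs.2.2.2.1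
    · have hs := (hI b' hb').sc B' h' x hx' y hy' z hz' h1 h2 h3
      obtain ⟨-, e1⟩ := fill_mem hx
      obtain ⟨-, e2⟩ := fill_mem hy
      obtain ⟨-, e3⟩ := fill_mem hz
      rw [← e1, ← e2, ← e3] at hs
      exact absurd ⟨near_gl _ _ _, near_gl _ _ _, near_gl _ _ _⟩ hs.2.2.2.1
    · obtain ⟨m1, e1⟩ := fill_mem hx
      obtain ⟨m2, e2⟩ := fill_mem hy
      obtain ⟨m3, e3⟩ := fill_mem hz
      obtain ⟨m1', e1'⟩ := fill_mem hx'
      obtain ⟨m2', e2'⟩ := fill_mem hy'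
      obtain ⟨m3', e3'⟩ := fill_mem hz'
      have n1 : p2 x ≠ p2 y := fun e => h1 (by rw [← e1, e, e2])
      have n2 : p2 x ≠ p2 z := fun e => h2 (by rw [← e1, e, e3])
      have n3 : p2 y ≠ p2 z := fun e => h3 (by rw [← e2, e, e3])
      obtain ⟨rfl, -, -⟩ := gl_unique n1 (e1.trans e1'.symm) (e2.trans e2'.symm)
      rw [hU.uniq _ _ _ n1 n2 n3 d hd d' hd' m1 m2 m3 m1' m2' m3']
  · intro x y hxy B hB hx
    have key : ∀ σ, used BU cU (p2 x) σ → ∃ B', B' ∈ PB BV BU D ∧ x ∈ B' ∧ y ∈ B' ∧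
        pc BV cV cU D γ x B' = Sum.inr σ := by
      intro σ hσ
      by_cases hN : Near x y
      · obtain ⟨a, e1, e2⟩ := near_group hxy hN
        obtain ⟨d, hd, hxd, rfl⟩ := hσ
        obtain ⟨d', hd', h1, h2, h3⟩ := hU.col (p2 x) (p2 y) (p2_ne hxy hN) d hd hxd
        refine ⟨d'.map (gl a), Or.inr ⟨a, d', hd', rfl⟩, ?_, ?_, ?_⟩
        · rw [← e1]; exact mem_map_of_mem _ h1
        · rw [← e2]; exact mem_map_of_mem _ h2
        · rw [pc_fill hU hI hd', h3]
      · unfold Near at hN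
        push Not at hN
        obtain ⟨b, hb, h1, h2, h3⟩ := hV.tri none (pr x) (pr y) (Ne.symm hN.1) (Ne.symm hN.2.1) hN.2.2
        obtain ⟨B', hB', h4, h5, h6⟩ := (hI b hb).hole2 h1 x y h2 h3
          (by unfold Near; tauto) σ hσ
        exact ⟨B', Or.inl ⟨b, hb, hB'⟩, h4, h5, pc_inr hV hI hb hB' h6⟩
    rcases pc_cases (cV := cV) hV hU hI hB x with
      ⟨b, hb, h, t, hg, hp⟩ | ⟨b, hb, h, σ, hg, hp⟩ | ⟨a, d, hd, rfl, hp⟩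
    · rw [hp]
      have hxb : pr x ∈ b := by
        obtain ⟨y, hy, hxy, -⟩ := ex2 ((hI b hb).card B h) hx x hx
        obtain ⟨z, hz, hxz, hyz⟩ := ex2 ((hI b hb).card B h) hx y hy
        exact ((hI b hb).sc B h x hx y hy z hz hxy.symm hxz.symm hyz.symm).1
      have : ∃ b' ∈ BV, pr x ∈ b' ∧ pr y ∈ b' ∧ (none ∈ b' ∨ pr x ≠ pr y) ∧
          cV (pr x) b' = cV (pr x) b := by
        by_cases he : pr x = pr y
        · have hn : pr x ≠ none := by
            intro h0
            have h0' := he ▸ h0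
            rw [pr_none] at h0 h0'
            exact hxy (h0.trans h0'.symm)
          obtain ⟨b', hb', h1, h2, h3⟩ := hV.col (pr x) none hn b hb hxb
          exact ⟨b', hb', h1, he ▸ h1, Or.inl h2, h3⟩
        · obtain ⟨b', hb', h1, h2, h3⟩ := hV.col (pr x) (pr y) he b hb hxb
          exact ⟨b', hb', h1, h2, Or.inr he, h3⟩
      obtain ⟨b', hb', h1, h2, h3, h4⟩ := this
      obtain ⟨B', hB', h5, h6, h7⟩ := (hI b' hb').full x y hxy h1 h2 h3 t
      exact ⟨B', Or.inl ⟨b', hb', hB'⟩, h5, h6, by rw [pc_inl hV hI hb' hB' h7, h4]⟩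
    · rw [hp]
      exact key σ ((hI b hb).hole1 B h x hx σ hg).2.1
    · rw [hp]
      exact key _ ⟨d, hd, (fill_mem hx).1, rfl⟩
  · intro x y hxy B hB B' hB' hx hy hx' hy' hc
    have hsc : ∀ b ∈ BV, ∀ B ∈ D b, x ∈ B → y ∈ B → pr x ∈ b ∧ pr y ∈ b ∧
        (none ∈ b ∨ pr x ≠ pr y) := by
      intro b hb B h hx hy
      obtain ⟨z, hz, hxz, hyz⟩ := ex2 ((hI b hb).card B h) hx y hy
      have := ((hI b hb).sc B h x hx y hy z hz hxy hxz.symm hyz.symm)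
      exact ⟨this.1, this.2.1, this.2.2.2.2.imp id (fun h => h.1)⟩
    rcases pc_cases (cV := cV) hV hU hI hB x with
      ⟨b, hb, h, t, hg, hp⟩ | ⟨b, hb, h, σ, hg, hp⟩ | ⟨a, d, hd, rfl, hp⟩ <;>
    rcases pc_cases (cV := cV) hV hU hI hB' x with
      ⟨b', hb', h', t', hg', hp'⟩ | ⟨b', hb', h', σ', hg', hp'⟩ | ⟨a', d', hd', rfl, hp'⟩ <;>
    rw [hp, hp'] at hc <;>
      try (first | exact absurd hc Sum.inl_ne_inr | exact absurd hc Sum.inr_ne_inl)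
    · simp only [Sum.inl.injEq, Prod.mk.injEq] at hc
      obtain ⟨hc, rfl⟩ := hc
      obtain ⟨s1, s2, s3⟩ := hsc b hb B h hx hy
      obtain ⟨s1', s2', s3'⟩ := hsc b' hb' B' h' hx' hy'
      have : b = b' := by
        by_cases he : pr x = pr y
        · have hn : pr x ≠ none := by
            intro h0
            have h0' := he ▸ h0
            rw [pr_none] at h0 h0'
            exact hxy (h0.trans h0'.symm)
          exact hV.colu (pr x) none hn b hb b' hb' s1 (by tauto) s1' (by tauto) hc
        · exact hV.colu (pr x) (pr y) he b hb b' hb' s1 s2 s1' s2' hc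
      subst this
      exact (hI b hb).colu x y hxy B h B' h' hx hy hx' hy' (hg.trans hg'.symm)
    · simp only [Sum.inr.injEq] at hc
      subst hc
      obtain ⟨s1, s2, s3⟩ := hsc b hb B h hx hy
      obtain ⟨s1', s2', s3'⟩ := hsc b' hb' B' h' hx' hy'
      obtain ⟨k1, -, k2⟩ := (hI b hb).hole1 B h x hx σ hg
      obtain ⟨k1', -, -⟩ := (hI b' hb').hole1 B' h' x hx' σ hg'
      have hN := k2 y hy hxy.symm
      unfold Near at hN
      push Not at hN
      have : b = b' := hV.uniq none (pr x) (pr y) (Ne.symm hN.1) (Ne.symm hN.2.1) hN.2.2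
        b hb b' hb' k1 s1 s2 k1' s1' s2'
      subst this
      exact (hI b hb).colu x y hxy B h B' h' hx hy hx' hy' (hg.trans hg'.symm)
    · exfalso
      obtain ⟨k1, -, k2⟩ := (hI b hb).hole1 B h x hx σ hg
      have := k2 y hy hxy.symm
      rw [← (fill_mem hx').2, ← (fill_mem hy').2] at this
      exact this (near_gl _ _ _)
    · exfalso
      obtain ⟨k1, -, k2⟩ := (hI b' hb').hole1 B' h' x hx' σ' hg'
      have := k2 y hy' hxy.symm
      rw [← (fill_mem hx).2, ← (fill_mem hy).2] at this
      exact this (near_gl _ _ _)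
    · obtain ⟨m1, e1⟩ := fill_mem hx
      obtain ⟨m2, e2⟩ := fill_mem hy
      obtain ⟨m1', e1'⟩ := fill_mem hx'
      obtain ⟨m2', e2'⟩ := fill_mem hy'
      have n1 : p2 x ≠ p2 y := fun e => hxy (by rw [← e1, e, e2])
      obtain ⟨rfl, -, -⟩ := gl_unique n1 (e1.trans e1'.symm) (e2.trans e2'.symm)
      simp only [Sum.inr.injEq] at hc
      rw [hU.colu _ _ n1 d hd d' hd' m1 m2 m1' m2' hc]

end prod

/-! ### transport of ingredients -/
section transport
variable {A' A G Γ : Type}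

def eo (e : A' ↪ A) : Option A' ↪ Option A := ⟨Option.map e, Option.map_injective e.injective⟩
def ep (e : A' ↪ A) : Option (A' × G) ↪ Option (A × G) :=
  ⟨Option.map (Prod.map e id), Option.map_injective (e.injective.prodMap Function.injective_id)⟩

lemma pr_ep (e : A' ↪ A) (x : Option (A' × G)) : pr (ep e x) = eo e (pr x) := by
  cases x <;> rfl
lemma p2_ep (e : A' ↪ A) (x : Option (A' × G)) : p2 (ep e x) = p2 x := by
  cases x <;> rfl
lemma eo_none (e : A' ↪ A) (x : Option A') : eo e x = none ↔ x = none := by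
  cases x <;> simp [eo]
lemma none_eo (e : A' ↪ A) (b : Finset (Option A')) : none ∈ b.map (eo e) ↔ none ∈ b := by
  constructor
  · intro h
    obtain ⟨y, hy, h⟩ := Finset.mem_map.mp h
    rw [eo_none] at h
    exact h ▸ hy
  · intro h
    exact Finset.mem_map.mpr ⟨none, h, rfl⟩
lemma near_ep (e : A' ↪ A) (x y : Option (A' × G)) : Near (ep e x) (ep e y) ↔ Near x y := by
  unfold Near
  simp only [pr_ep, eo_none, EmbeddingLike.apply_eq_iff_eq]
lemma scope_ep (e : A' ↪ A) (b : Finset (Option A')) (x y z : Option (A' × G)) :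
    Scope (b.map (eo e)) (ep e x) (ep e y) (ep e z) ↔ Scope b x y z := by
  unfold Scope
  simp only [near_ep, none_eo, pr_ep, Finset.mem_map', ne_eq, EmbeddingLike.apply_eq_iff_eq]
lemma ep_surj (e : A' ↪ A) (b : Finset (Option A')) (x : Option (A × G))
    (h : pr x ∈ b.map (eo e)) : ∃ x', pr x' ∈ b ∧ ep e x' = x := by
  obtain ⟨y, hy, h⟩ := Finset.mem_map.mp h
  rcases x with _ | ⟨a, g⟩
  · refine ⟨none, ?_, rfl⟩
    have : eo e y = none := h
    rw [eo_none] at this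
    exact (this ▸ hy : none ∈ b)
  · rcases y with _ | a'
    · simp [eo, pr] at h
    · have : e a' = a := by simpa [eo, pr] using h
      exact ⟨some (a', g), hy, by simp [ep, this]⟩

open Classical in
noncomputable def tc (e : A' ↪ A) (γ : Option (A' × G) → Finset (Option (A' × G)) → G ⊕ Γ)
    (x : Option (A × G)) (B : Finset (Option (A × G))) : G ⊕ Γ :=
  γ (Function.invFun (ep e) x) (B.preimage (ep e) (ep e).injective.injOn)

lemma tc_eq (e : A' ↪ A) (γ : Option (A' × G) → Finset (Option (A' × G)) → G ⊕ Γ)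
    (x : Option (A' × G)) (B : Finset (Option (A' × G))) :
    tc e γ (ep e x) (B.map (ep e)) = γ x B := by
  unfold tc
  rw [Function.leftInverse_invFun (ep e).injective x, Finset.preimage_map]

theorem IsIng.transport (e : A' ↪ A) {b : Finset (Option A')} {D : Set (Finset (Option (A' × G)))}
    {γ : Option (A' × G) → Finset (Option (A' × G)) → G ⊕ Γ} {used : Option G → Γ → Prop}
    (h : IsIng b D γ used) :
    IsIng (b.map (eo e)) ((fun B => B.map (ep e)) '' D) (tc e γ) used := by
  refine ⟨?_, ?_, ?_, ?_, ?_, ?_, ?_, ?_⟩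
  · rintro _ ⟨B, hB, rfl⟩
    rw [Finset.card_map]; exact h.card B hB
  · rintro _ ⟨B, hB, rfl⟩ x hx y hy z hz
    obtain ⟨x, mx, rfl⟩ := Finset.mem_map.mp hx
    obtain ⟨y, my, rfl⟩ := Finset.mem_map.mp hy
    obtain ⟨z, mz, rfl⟩ := Finset.mem_map.mp hz
    simp only [ne_eq, EmbeddingLike.apply_eq_iff_eq, scope_ep]
    exact h.sc B hB x mx y my z mz
  · intro x y z h1 h2 h3 hs
    obtain ⟨x, mx, rfl⟩ := ep_surj e b x hs.1
    obtain ⟨y, my, rfl⟩ := ep_surj e b y hs.2.1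
    obtain ⟨z, mz, rfl⟩ := ep_surj e b z hs.2.2.1
    rw [scope_ep] at hs
    obtain ⟨B, hB, k1, k2, k3⟩ := h.tri x y z (by simpa using h1) (by simpa using h2)
      (by simpa using h3) hs
    exact ⟨B.map (ep e), ⟨B, hB, rfl⟩, mem_map_of_mem _ k1, mem_map_of_mem _ k2,
      mem_map_of_mem _ k3⟩
  · rintro x y z h1 h2 h3 _ ⟨B, hB, rfl⟩ _ ⟨B', hB', rfl⟩ hx hy hz hx' hy' hz'
    obtain ⟨x, mx, rfl⟩ := Finset.mem_map.mp hx
    obtain ⟨y, my, rfl⟩ := Finset.mem_map.mp hy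
    obtain ⟨z, mz, rfl⟩ := Finset.mem_map.mp hz
    simp only [Finset.mem_map'] at hx' hy' hz'
    dsimp only
    rw [h.uniq x y z (by simpa using h1) (by simpa using h2) (by simpa using h3) B hB B' hB'
      mx my mz hx' hy' hz']
  · intro x y h1 hx hy hn t
    obtain ⟨x, mx, rfl⟩ := ep_surj e b x hx
    obtain ⟨y, my, rfl⟩ := ep_surj e b y hy
    rw [none_eo, pr_ep, pr_ep] at hn
    obtain ⟨B, hB, k1, k2, k3⟩ := h.full x y (by simpa using h1) mx my (by simpa using hn) t
    exact ⟨B.map (ep e), ⟨B, hB, rfl⟩, mem_map_of_mem _ k1, mem_map_of_mem _ k2, by rw [tc_eq, k3]⟩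
  · rintro x y h1 _ ⟨B, hB, rfl⟩ _ ⟨B', hB', rfl⟩ hx hy hx' hy' hc
    obtain ⟨x, mx, rfl⟩ := Finset.mem_map.mp hx
    obtain ⟨y, my, rfl⟩ := Finset.mem_map.mp hy
    simp only [Finset.mem_map', tc_eq] at hx' hy' hc
    dsimp only
    rw [h.colu x y (by simpa using h1) B hB B' hB' mx my hx' hy' hc]
  · rintro _ ⟨B, hB, rfl⟩ x hx σ hσ
    obtain ⟨x, mx, rfl⟩ := Finset.mem_map.mp hx
    rw [tc_eq] at hσ
    obtain ⟨k1, k2, k3⟩ := h.hole1 B hB x mx σ hσ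
    refine ⟨(none_eo _ _).mpr k1, by rwa [p2_ep], ?_⟩
    intro y hy hyx
    obtain ⟨y, my, rfl⟩ := Finset.mem_map.mp hy
    rw [near_ep]
    exact k3 y my (by simpa using hyx)
  · intro hn x y hx hy hN σ hσ
    obtain ⟨x, mx, rfl⟩ := ep_surj e b x hx
    obtain ⟨y, my, rfl⟩ := ep_surj e b y hy
    rw [none_eo] at hn
    rw [near_ep] at hN
    rw [p2_ep] at hσ
    obtain ⟨B, hB, k1, k2, k3⟩ := h.hole2 hn x y mx my hN σ hσ
    exact ⟨B.map (ep e), ⟨B, hB, rfl⟩, mem_map_of_mem _ k1, mem_map_of_mem _ k2, by rw [tc_eq, k3]⟩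

end transport

def Rows {A G Γ : Type} [Zero G] (b : Finset (Option A)) (D : Set (Finset (Option (A × G))))
    (γ : Option (A × G) → Finset (Option (A × G)) → G ⊕ Γ) : Prop :=
  ∀ g, b.map (rl g) ∈ D ∧ ∀ x ∈ b.map (rl g), γ x (b.map (rl g)) = Sum.inl 0

lemma Rows.transport {A' A G Γ : Type} [Zero G] (e : A' ↪ A) {b : Finset (Option A')}
    {D : Set (Finset (Option (A' × G)))}
    {γ : Option (A' × G) → Finset (Option (A' × G)) → G ⊕ Γ} (h : Rows b D γ) :
    Rows (b.map (eo e)) ((fun B => B.map (ep e)) '' D) (tc e γ) := by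
  intro g
  have key : (b.map (eo e)).map (rl g) = (b.map (rl g)).map (ep e) := by
    rw [Finset.map_map, Finset.map_map]
    congr 1
    ext x : 1
    cases x <;> rfl
  rw [key]
  refine ⟨⟨_, (h g).1, rfl⟩, ?_⟩
  intro x hx
  obtain ⟨x, mx, rfl⟩ := Finset.mem_map.mp hx
  rw [tc_eq]
  exact (h g).2 x mx

section TD
variable {G Γ : Type} [CommRing G]

def tblk (h : Fin 4 → G) : Finset (Option (Fin 4 × G)) :=
  univ.map ⟨fun k => some (k, h k), fun i j hij => by simp at hij; exact hij.1⟩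

lemma mem_tblk (h : Fin 4 → G) (k : Fin 4) (g : G) : some (k, g) ∈ tblk h ↔ h k = g := by
  simp only [tblk, Finset.mem_map, Finset.mem_univ, true_and]
  constructor
  · rintro ⟨a, ha⟩
    have ha : some (a, h a) = some (k, g) := ha
    simp only [Option.some.injEq, Prod.mk.injEq] at ha
    obtain ⟨rfl, rfl⟩ := ha
    rfl
  · rintro rfl
    exact ⟨k, rfl⟩

lemma none_tblk (h : Fin 4 → G) : none ∉ tblk h := by
  simp [tblk]

open Classical in
noncomputable def tco (B : Finset (Option (Fin 4 × G))) (k : Fin 4) : G :=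
  if h : ∃ g, some (k, g) ∈ B then h.choose else 0

lemma tco_tblk (h : Fin 4 → G) : tco (tblk h) = h := by
  funext k
  have hex : ∃ g, some (k, g) ∈ tblk h := ⟨h k, (mem_tblk _ _ _).2 rfl⟩
  unfold tco
  rw [dif_pos hex]
  exact ((mem_tblk _ _ _).1 hex.choose_spec).symm

def tcv (k : Fin 4) (h : Fin 4 → G) : G := if k = 0 ∨ k = 1 then h 2 - h 3 else h 0 - h 1

noncomputable def tdc (x : Option (Fin 4 × G)) (B : Finset (Option (Fin 4 × G))) : G ⊕ Γ :=
  match x with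
  | none => Sum.inl 0
  | some (k, _) => Sum.inl (tcv k (tco B))

def TDD : Set (Finset (Option (Fin 4 × G))) := {B | ∃ h : Fin 4 → G, h 0 + h 1 = h 2 + h 3 ∧ B = tblk h}

lemma td_ex (v : Fin 4 → G) (l : Fin 4) : ∃ h : Fin 4 → G, h 0 + h 1 = h 2 + h 3 ∧
    ∀ m, m ≠ l → h m = v m := by
  fin_cases l
  · exact ⟨![v 2 + v 3 - v 1, v 1, v 2, v 3], by simp, fun m hm => by fin_cases m <;> simp_all⟩
  · exact ⟨![v 0, v 2 + v 3 - v 0, v 2, v 3], by simp, fun m hm => by fin_cases m <;> simp_all⟩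
  · exact ⟨![v 0, v 1, v 0 + v 1 - v 3, v 3], by simp, fun m hm => by fin_cases m <;> simp_all⟩
  · exact ⟨![v 0, v 1, v 2, v 0 + v 1 - v 2], by simp, fun m hm => by fin_cases m <;> simp_all⟩

lemma td_un (h h' : Fin 4 → G) (e : h 0 + h 1 = h 2 + h 3) (e' : h' 0 + h' 1 = h' 2 + h' 3)
    (l : Fin 4) (hl : ∀ m, m ≠ l → h m = h' m) : h = h' := by
  funext m
  by_cases hm : m = l
  · subst hm
    have h0 := hl 0
    have h1 := hl 1
    have h2 := hl 2
    have h3 := hl 3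
    fin_cases m <;> simp at h0 h1 h2 h3 ⊢
    · linear_combination e - e' - h1 + h2 + h3
    · linear_combination e - e' - h0 + h2 + h3
    · linear_combination -e + e' + h0 + h1 - h3
    · linear_combination -e + e' + h0 + h1 - h2
  · exact hl m hm

lemma td_full (hf : G) (hhf : 2 * hf = 1) (i j : Fin 4) (hij : i ≠ j) (a b t : G) :
    ∃ h : Fin 4 → G, h 0 + h 1 = h 2 + h 3 ∧ h i = a ∧ h j = b ∧ tcv i h = t := by
  fin_cases i <;> fin_cases j <;> simp at hij
  · exact ⟨![a, b, hf * (a + b + t), hf * (a + b - t)], by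
      simp; linear_combination -(a + b) * hhf, by simp, by simp, by
      simp [tcv]; linear_combination t * hhf⟩
  · exact ⟨![a, b + b - t - a, b, b - t], by simp; ring, by simp, by simp, by simp [tcv]⟩
  · exact ⟨![a, b + b + t - a, b + t, b], by simp; ring, by simp, by simp, by simp [tcv]⟩
  · exact ⟨![b, a, hf * (a + b + t), hf * (a + b - t)], by
      simp; linear_combination -(a + b) * hhf, by simp, by simp, by
      simp [tcv]; linear_combination t * hhf⟩
  · exact ⟨![b + b - t - a, a, b, b - t], by simp; ring, by simp, by simp, by simp [tcv]⟩
  · exact ⟨![b + b + t - a, a, b + t, b], by simp; ring, by simp, by simp, by simp [tcv]⟩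
  · exact ⟨![b, b - t, a, b + b - t - a], by simp; ring, by simp, by simp, by simp [tcv]⟩
  · exact ⟨![b + t, b, a, b + b + t - a], by simp; ring, by simp, by simp, by simp [tcv]⟩
  · exact ⟨![hf * (a + b + t), hf * (a + b - t), a, b], by
      simp; linear_combination (a + b) * hhf, by simp, by simp, by
      simp [tcv]; linear_combination t * hhf⟩
  · exact ⟨![b, b - t, b + b - t - a, a], by simp; ring, by simp, by simp, by simp [tcv]⟩
  · exact ⟨![b + t, b, b + b + t - a, a], by simp; ring, by simp, by simp, by simp [tcv]⟩
  · exact ⟨![hf * (a + b + t), hf * (a + b - t), b, a], by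
      simp; linear_combination (a + b) * hhf, by simp, by simp, by
      simp [tcv]; linear_combination t * hhf⟩

lemma td_colu (hf : G) (hhf : 2 * hf = 1) (i j : Fin 4) (hij : i ≠ j) (h h' : Fin 4 → G)
    (e : h 0 + h 1 = h 2 + h 3) (e' : h' 0 + h' 1 = h' 2 + h' 3) (hi : h i = h' i) (hj : h j = h' j)
    (hc : tcv i h = tcv i h') : h = h' := by
  have c2 : ∀ a b : G, 2 * a = 2 * b → a = b := fun a b hab => by
    linear_combination hf * hab - (a - b) * hhf
  have c0 := c2 (h 0) (h' 0)
  have c1 := c2 (h 1) (h' 1)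
  have c22 := c2 (h 2) (h' 2)
  have c3 := c2 (h 3) (h' 3)
  have : h 0 = h' 0 ∧ h 1 = h' 1 ∧ h 2 = h' 2 ∧ h 3 = h' 3 := by
    fin_cases i <;> fin_cases j <;> simp [tcv] at hij hi hj hc <;> grind
  funext m
  fin_cases m <;> simp [this]

theorem td_ing (hf : G) (hhf : 2 * hf = 1) (us : Option G → Γ → Prop) :
    IsIng (univ.map Function.Embedding.some : Finset (Option (Fin 4))) (TDD (G := G)) tdc us := by
  have nb : none ∉ (univ.map Function.Embedding.some : Finset (Option (Fin 4))) := by simp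
  refine ⟨?_, ?_, ?_, ?_, ?_, ?_, ?_, ?_⟩
  · rintro _ ⟨h, e, rfl⟩
    simp [tblk]
  · rintro _ ⟨h, e, rfl⟩ (_ | ⟨i, a⟩) hx (_ | ⟨j, b⟩) hy (_ | ⟨k, c⟩) hz h1 h2 h3 <;>
      try (exact absurd (by assumption) (none_tblk h))
    rw [mem_tblk] at hx hy hz
    subst hx hy hz
    have h1 : i ≠ j := fun e => h1 (by rw [e])
    have h2 : i ≠ k := fun e => h2 (by rw [e])
    have h3 : j ≠ k := fun e => h3 (by rw [e])
    simp [Scope, pr, Near, h1, h2, h3]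
  · rintro (_ | ⟨i, a⟩) (_ | ⟨j, b⟩) (_ | ⟨k, c⟩) h1 h2 h3 hs <;> try (simp [Scope, pr] at hs; done)
    simp [Scope, pr, Near] at hs
    obtain ⟨-, g1, g2, g3⟩ := hs
    have : ∀ i j k : Fin 4, ∃ l, i ≠ l ∧ j ≠ l ∧ k ≠ l := by decide
    obtain ⟨l, l1, l2, l3⟩ := this i j k
    obtain ⟨h, e, hh⟩ := td_ex (fun m => if m = i then a else if m = j then b else c) l
    refine ⟨tblk h, ⟨h, e, rfl⟩, ?_, ?_, ?_⟩ <;> rw [mem_tblk, hh _ (by assumption)]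
    · simp
    · simp [Ne.symm g1]
    · simp [Ne.symm g2, Ne.symm g3]
  · rintro (_ | ⟨i, a⟩) (_ | ⟨j, b⟩) (_ | ⟨k, c⟩) h1 h2 h3 _ ⟨h, e, rfl⟩ _ ⟨h', e', rfl⟩
      hx hy hz hx' hy' hz' <;>
      try (exact absurd (by assumption) (none_tblk h))
    rw [mem_tblk] at hx hy hz hx' hy' hz'
    have h1 : i ≠ j := fun e => h1 (by rw [← hx, ← hy, e])
    have h2 : i ≠ k := fun e => h2 (by rw [← hx, ← hz, e])
    have h3 : j ≠ k := fun e => h3 (by rw [← hy, ← hz, e])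
    have : ∀ i j k : Fin 4, i ≠ j → i ≠ k → j ≠ k → ∃ l, ∀ m, m ≠ l → m = i ∨ m = j ∨ m = k := by
      decide
    obtain ⟨l, hl⟩ := this i j k h1 h2 h3
    rw [td_un h h' e e' l]
    intro m hm
    rcases hl m hm with rfl | rfl | rfl
    · rw [hx, hx']
    · rw [hy, hy']
    · rw [hz, hz']
  · rintro (_ | ⟨i, a⟩) (_ | ⟨j, b⟩) h1 hx hy hn t <;> try (simp [pr] at hx hy; done)
    have hij : i ≠ j := by simpa [pr] using hn
    obtain ⟨h, e, e1, e2, e3⟩ := td_full hf hhf i j hij a b t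
    exact ⟨tblk h, ⟨h, e, rfl⟩, (mem_tblk _ _ _).2 e1, (mem_tblk _ _ _).2 e2, by
      simp [tdc, tco_tblk, e3]⟩
  · rintro (_ | ⟨i, a⟩) (_ | ⟨j, b⟩) h1 _ ⟨h, e, rfl⟩ _ ⟨h', e', rfl⟩ hx hy hx' hy' hc <;>
      try (exact absurd (by assumption) (none_tblk h))
    rw [mem_tblk] at hx hy hx' hy'
    have h1 : i ≠ j := fun e => h1 (by rw [← hx, ← hy, e])
    simp only [tdc, tco_tblk, Sum.inl.injEq] at hc
    rw [td_colu hf hhf i j h1 h h' e e' (hx.trans hx'.symm) (hy.trans hy'.symm) hc]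
  · rintro B - (_ | ⟨i, a⟩) hx σ hσ <;> simp [tdc] at hσ
  · intro h
    exact absurd h nb

theorem td_rows : Rows (univ.map Function.Embedding.some : Finset (Option (Fin 4))) (TDD (G := G))
    (tdc (Γ := Γ)) := by
  intro g
  have : (univ.map Function.Embedding.some : Finset (Option (Fin 4))).map (rl g) =
      tblk (fun _ => g) := by
    rw [Finset.map_map]
    rfl
  rw [this]
  refine ⟨⟨_, rfl, rfl⟩, ?_⟩
  rintro (_ | ⟨i, a⟩) hx
  · rfl
  · simp only [tdc, tco_tblk, tcv]
    simp

end TD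

lemma ex_emb4 {A : Type} (b : Finset (Option A)) (hc : b.card = 4) (hn : none ∉ b) :
    ∃ e : Fin 4 ↪ A, (univ.map Function.Embedding.some).map (eo e) = b := by
  have hc' : b.eraseNone.card = 4 := by
    rw [Finset.card_eraseNone_of_not_mem hn, hc]
  let e := (Finset.equivFinOfCardEq hc').symm
  refine ⟨⟨fun k => (e k).1, fun i j h => e.injective (Subtype.ext h)⟩, ?_⟩
  ext x
  simp only [Finset.mem_map, Finset.mem_univ, true_and]
  constructor
  · rintro ⟨_, ⟨k, rfl⟩, rfl⟩
    exact Finset.mem_eraseNone.mp (e k).2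
  · intro hx
    rcases x with _ | a
    · exact absurd hx hn
    · refine ⟨_, ⟨e.symm ⟨a, Finset.mem_eraseNone.mpr hx⟩, rfl⟩, ?_⟩
      exact congrArg some (congrArg Subtype.val (e.apply_symm_apply _))

lemma ex_emb3 {A : Type} (b : Finset (Option A)) (hc : b.card = 4) (hn : none ∈ b) :
    ∃ e : ZMod 3 ↪ A, (univ : Finset (Option (ZMod 3))).map (eo e) = b := by
  have hc' : b.eraseNone.card = 3 := by
    rw [Finset.card_eraseNone_of_mem hn, hc]
  let e : ZMod 3 ≃ b.eraseNone := (Finset.equivFinOfCardEq hc').symm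
  refine ⟨⟨fun k => (e k).1, fun i j h => e.injective (Subtype.ext h)⟩, ?_⟩
  ext x
  simp only [Finset.mem_map, Finset.mem_univ, true_and]
  constructor
  · rintro ⟨_ | k, rfl⟩
    · exact hn
    · exact Finset.mem_eraseNone.mp (e k).2
  · intro hx
    rcases x with _ | a
    · exact ⟨none, rfl⟩
    · refine ⟨some (e.symm ⟨a, Finset.mem_eraseNone.mpr hx⟩), ?_⟩
      exact congrArg some (congrArg Subtype.val (e.apply_symm_apply _))

section flip
variable {I ΓW ΓU : Type} {BW : Set (Finset (Option (ZMod 3 × I)))}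
  {cW : Option (ZMod 3 × I) → Finset (Option (ZMod 3 × I)) → ΓW}
  {BU : Set (Finset (Option I))} {cU : Option I → Finset (Option I) → ΓU} {κ : ΓU → ΓW}

def FRows (BW : Set (Finset (Option (ZMod 3 × I))))
  (cW : Option (ZMod 3 × I) → Finset (Option (ZMod 3 × I)) → ΓW)
  (BU : Set (Finset (Option I))) (cU : Option I → Finset (Option I) → ΓU) (κ : ΓU → ΓW) : Prop :=
  ∀ d ∈ BU, ∀ r, d.map (gl r) ∈ BW ∧
    ∀ x ∈ d.map (gl r), cW x (d.map (gl r)) = κ (cU (p2 x) d)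

def FD (BW : Set (Finset (Option (ZMod 3 × I)))) : Set (Finset (Option (ZMod 3 × I))) :=
  {B | B ∈ BW ∧ ∃ x ∈ B, ∃ y ∈ B, ¬ Near x y}

lemma F1 (hW : IsRD BW cW) (hU : IsRD BU cU) (hR : FRows BW cW BU cU κ)
    {B : Finset (Option (ZMod 3 × I))} (hB : B ∈ BW) {x y z : Option (ZMod 3 × I)} (hx : x ∈ B)
    (hy : y ∈ B) (hz : z ∈ B) (h1 : x ≠ y) (h2 : x ≠ z) (h3 : y ≠ z)
    (hN : Near x y ∧ Near x z ∧ Near y z) : ∃ r, ∃ d ∈ BU, B = d.map (gl r) := by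
  obtain ⟨a, ha, hb, hc⟩ := near3_group h1 hN.1 hN.2.1 hN.2.2
  obtain ⟨d, hd, hx', hy', hz'⟩ := hU.tri (p2 x) (p2 y) (p2 z) (p2_ne h1 hN.1) (p2_ne h2 hN.2.1)
    (p2_ne h3 hN.2.2)
  refine ⟨a, d, hd, hW.uniq x y z h1 h2 h3 B hB _ (hR d hd a).1 hx hy hz ?_ ?_ ?_⟩
  · rw [← ha]; exact mem_map_of_mem _ hx'
  · rw [← hb]; exact mem_map_of_mem _ hy'
  · rw [← hc]; exact mem_map_of_mem _ hz'

lemma fill_FD {r : ZMod 3} {d : Finset (Option I)} : d.map (gl r) ∉ FD BW := by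
  rintro ⟨-, x, hx, y, hy, h⟩
  rw [← (fill_mem hx).2, ← (fill_mem hy).2] at h
  exact h (near_gl _ _ _)

lemma F2 (hW : IsRD BW cW) (hU : IsRD BU cU) (hR : FRows BW cW BU cU κ)
    {B : Finset (Option (ZMod 3 × I))} (hB : B ∈ FD BW) {x y z : Option (ZMod 3 × I)} (hx : x ∈ B)
    (hy : y ∈ B) (hz : z ∈ B) (h1 : x ≠ y) (h2 : x ≠ z) (h3 : y ≠ z) :
    ¬ (Near x y ∧ Near x z ∧ Near y z) := by
  intro hN
  obtain ⟨r, d, hd, rfl⟩ := F1 hW hU hR hB.1 hx hy hz h1 h2 h3 hN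
  exact fill_FD hB

lemma F3 (hW : IsRD BW cW) (hU : IsRD BU cU) (hR : FRows BW cW BU cU κ)
    {B : Finset (Option (ZMod 3 × I))} (hB : B ∈ FD BW) {x y : Option (ZMod 3 × I)} (hx : x ∈ B)
    (hy : y ∈ B) (h1 : x ≠ y) {σ : ΓU} (hσ : used BU cU (p2 x) σ) (hc : cW x B = κ σ) :
    ¬ Near x y := by
  intro hN
  obtain ⟨a, ha, hb⟩ := near_group h1 hN
  obtain ⟨d0, hd0, hx0, rfl⟩ := hσ
  obtain ⟨d, hd, hx', hy', hc'⟩ := hU.col (p2 x) (p2 y) (p2_ne h1 hN) d0 hd0 hx0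
  have mx : x ∈ d.map (gl a) := by rw [← ha]; exact mem_map_of_mem _ hx'
  have my : y ∈ d.map (gl a) := by rw [← hb]; exact mem_map_of_mem _ hy'
  have := hW.colu x y h1 B hB.1 _ (hR d hd a).1 hx hy mx my
    (by rw [(hR d hd a).2 x mx, hc, hc'])
  subst this
  exact fill_FD hB

lemma notFD (hW : IsRD BW cW) (hU : IsRD BU cU) (hR : FRows BW cW BU cU κ)
    {B : Finset (Option (ZMod 3 × I))} (hB : B ∈ BW) (hn : B ∉ FD BW) {x : Option (ZMod 3 × I)}
    (hx : x ∈ B) : ∃ σ, used BU cU (p2 x) σ ∧ cW x B = κ σ := by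
  have hn : ∀ x ∈ B, ∀ y ∈ B, Near x y := by
    intro x hx y hy
    by_contra h
    exact hn ⟨hB, x, hx, y, hy, h⟩
  obtain ⟨y, hy, hxy, -⟩ := ex2 (hW.card B hB) hx x hx
  obtain ⟨z, hz, hxz, hyz⟩ := ex2 (hW.card B hB) hx y hy
  obtain ⟨r, d, hd, rfl⟩ := F1 hW hU hR hB hx hy hz hxy.symm hxz.symm hyz.symm
    ⟨hn _ hx _ hy, hn _ hx _ hz, hn _ hy _ hz⟩
  exact ⟨_, ⟨d, hd, (fill_mem hx).1, rfl⟩, (hR d hd r).2 x hx⟩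

def ref (i0 : I) (x : Option (ZMod 3 × I)) : Option (ZMod 3 × I) :=
  match x with
  | none => some (0, i0)
  | some _ => none

def nx (x : Option (ZMod 3 × I)) (t : I) : Option (ZMod 3 × I) :=
  match x with
  | none => some (1, t)
  | some p => some (p.1 + 1, t)

lemma ref_ne (i0 : I) (x : Option (ZMod 3 × I)) : x ≠ ref i0 x := by
  cases x <;> simp [ref]
lemma ref_near (i0 : I) (x : Option (ZMod 3 × I)) : Near x (ref i0 x) := by
  cases x <;> simp [ref, Near, pr]
lemma nx_spec (i0 : I) (x : Option (ZMod 3 × I)) (t : I) :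
    x ≠ nx x t ∧ ref i0 x ≠ nx x t ∧ ¬ (Near x (ref i0 x) ∧ Near x (nx x t) ∧
      Near (ref i0 x) (nx x t)) := by
  rcases x with _ | ⟨r, i⟩
  · simp [ref, Near, pr, nx]
  · have : ∀ r : ZMod 3, r ≠ r + 1 := by decide
    simp [ref, Near, pr, nx]

lemma E0 (hW : IsRD BW cW) (hU : IsRD BU cU) (hR : FRows BW cW BU cU κ)
    {B : Finset (Option (ZMod 3 × I))} (hB : B ∈ FD BW) (hn : none ∈ B) {r : ZMod 3} {i : I}
    (hr : some (r, i) ∈ B) : ∃ t, some (r + 1, t) ∈ B := by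
  classical
  have hc := hW.card B hB.1
  obtain ⟨p, hp, hp1, hp2⟩ := ex2 hc hn _ hr
  have : ∃ q ∈ B, q ≠ none ∧ q ≠ some (r, i) ∧ q ≠ p := by
    have : 0 < (((B.erase none).erase (some (r, i))).erase p).card := by
      have := Finset.pred_card_le_card_erase (s := B) (a := none)
      have := Finset.pred_card_le_card_erase (s := B.erase none) (a := some (r, i))
      have := Finset.pred_card_le_card_erase (s := (B.erase none).erase (some (r, i))) (a := p)
      omega
    obtain ⟨z, hz⟩ := Finset.card_pos.mp this
    simp only [Finset.mem_erase] at hz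
    exact ⟨z, hz.2.2.2, hz.2.2.1, hz.2.1, hz.1⟩
  obtain ⟨q, hq, hq1, hq2, hq3⟩ := this
  have k1 := F2 hW hU hR hB hn hr hp (by simp) hp1.symm hp2.symm
  have k2 := F2 hW hU hR hB hn hr hq (by simp) hq1.symm hq2.symm
  have k3 := F2 hW hU hR hB hn hp hq hp1.symm hq1.symm hq3.symm
  rcases p with _ | ⟨r1, t1⟩
  · exact absurd rfl hp1
  rcases q with _ | ⟨r2, t2⟩
  · exact absurd rfl hq1
  simp [Near, pr] at k1 k2 k3
  have : ∀ r r1 r2 : ZMod 3, ¬ r = r1 → ¬ r = r2 → ¬ r1 = r2 → r1 = r + 1 ∨ r2 = r + 1 := by decide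
  rcases this r r1 r2 k1 k2 k3 with rfl | rfl
  · exact ⟨t1, hp⟩
  · exact ⟨t2, hq⟩

lemma E1 (hW : IsRD BW cW) (hU : IsRD BU cU) (hR : FRows BW cW BU cU κ) (i0 : I)
    {B : Finset (Option (ZMod 3 × I))} (hB : B ∈ FD BW) {x : Option (ZMod 3 × I)} (hx : x ∈ B)
    (hr : ref i0 x ∈ B) : ∃ t, nx x t ∈ B := by
  rcases x with _ | ⟨r, i⟩
  · simpa [nx] using E0 hW hU hR hB hx hr
  · exact E0 hW hU hR hB hr hx

lemma Un (hW : IsRD BW cW) (hU : IsRD BU cU) (hR : FRows BW cW BU cU κ) (i0 : I)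
    {B : Finset (Option (ZMod 3 × I))} (hB : B ∈ FD BW) {x : Option (ZMod 3 × I)} (hx : x ∈ B)
    (hr : ref i0 x ∈ B) {t t' : I} (h : nx x t ∈ B) (h' : nx x t' ∈ B) : t = t' := by
  by_contra hne
  rcases x with _ | ⟨r, i⟩
  · exact F2 hW hU hR hB hx h h' (by simp [nx]) (by simp [nx]) (by simpa [nx] using hne)
      (by simp [Near, nx, pr])
  · exact F2 hW hU hR hB hr h h' (by simp [nx, ref]) (by simp [nx, ref]) (by simpa [nx] using hne)
      (by simp [Near, nx, pr, ref])

open Classical in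
noncomputable def fc (BW : Set (Finset (Option (ZMod 3 × I))))
    (cW : Option (ZMod 3 × I) → Finset (Option (ZMod 3 × I)) → ΓW)
    (BU : Set (Finset (Option I))) (cU : Option I → Finset (Option I) → ΓU) (κ : ΓU → ΓW) (i0 : I)
    (x : Option (ZMod 3 × I)) (B : Finset (Option (ZMod 3 × I))) : I ⊕ ΓU :=
  if h : ∃ σ, used BU cU (p2 x) σ ∧ cW x B = κ σ then Sum.inr h.choose
  else if h : ∃ t, ∃ B' ∈ FD BW, x ∈ B' ∧ ref i0 x ∈ B' ∧ cW x B' = cW x B ∧ nx x t ∈ B' then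
    Sum.inl h.choose
  else Sum.inl i0

lemma fc_hole (hκ : Function.Injective κ) (i0 : I) {x : Option (ZMod 3 × I)}
    {B : Finset (Option (ZMod 3 × I))} {σ : ΓU} (hσ : used BU cU (p2 x) σ) (hc : cW x B = κ σ) :
    fc BW cW BU cU κ i0 x B = Sum.inr σ := by
  have h : ∃ σ, used BU cU (p2 x) σ ∧ cW x B = κ σ := ⟨σ, hσ, hc⟩
  unfold fc
  rw [dif_pos h]
  congr 1
  exact hκ (h.choose_spec.2.symm.trans hc)

lemma fc_full (hW : IsRD BW cW) (hU : IsRD BU cU) (hR : FRows BW cW BU cU κ) (i0 : I)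
    {x : Option (ZMod 3 × I)}
    {B B' : Finset (Option (ZMod 3 × I))} (hB' : B' ∈ FD BW) (hx : x ∈ B') (hr : ref i0 x ∈ B')
    {t : I} (ht : nx x t ∈ B') (hc : cW x B' = cW x B) :
    fc BW cW BU cU κ i0 x B = Sum.inl t := by
  have h0 : ¬ ∃ σ, used BU cU (p2 x) σ ∧ cW x B = κ σ := by
    rintro ⟨σ, hσ, h⟩
    exact F3 hW hU hR hB' hx hr (ref_ne _ _) hσ (hc.trans h) (ref_near _ _)
  have h : ∃ t, ∃ B' ∈ FD BW, x ∈ B' ∧ ref i0 x ∈ B' ∧ cW x B' = cW x B ∧ nx x t ∈ B' :=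
    ⟨t, B', hB', hx, hr, hc, ht⟩
  unfold fc
  rw [dif_neg h0, dif_pos h]
  congr 1
  obtain ⟨B'', hB'', hx'', hr'', hc'', ht''⟩ := h.choose_spec
  have := hW.colu x (ref i0 x) (ref_ne _ _) B' hB'.1 B'' hB''.1 hx hr hx'' hr''
    (hc.trans hc''.symm)
  subst this
  exact Un hW hU hR i0 hB' hx hr ht'' ht

lemma fc_ex (hW : IsRD BW cW) (hU : IsRD BU cU) (hR : FRows BW cW BU cU κ) (i0 : I)
    {x : Option (ZMod 3 × I)}
    {B : Finset (Option (ZMod 3 × I))} (hB : B ∈ FD BW) (hx : x ∈ B)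
    (h0 : ¬ ∃ σ, used BU cU (p2 x) σ ∧ cW x B = κ σ) :
    ∃ t, ∃ B' ∈ FD BW, x ∈ B' ∧ ref i0 x ∈ B' ∧ cW x B' = cW x B ∧ nx x t ∈ B' ∧
      fc BW cW BU cU κ i0 x B = Sum.inl t := by
  obtain ⟨B', hB', hx', hr', hc'⟩ := hW.col x (ref i0 x) (ref_ne _ _) B hB.1 hx
  have hF : B' ∈ FD BW := by
    by_contra hn
    obtain ⟨σ, h1, h2⟩ := notFD hW hU hR hB' hn hx'
    exact h0 ⟨σ, h1, hc'.symm.trans h2⟩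
  obtain ⟨t, ht⟩ := E1 hW hU hR i0 hF hx' hr'
  exact ⟨t, B', hF, hx', hr', hc', ht, fc_full hW hU hR i0 hF hx' hr' ht hc'⟩

theorem flip_ing (hW : IsRD BW cW) (hU : IsRD BU cU) (hR : FRows BW cW BU cU κ)
    (hκ : Function.Injective κ) (i0 : I) :
    IsIng (univ : Finset (Option (ZMod 3))) (FD BW) (fc BW cW BU cU κ i0) (used BU cU) := by
  refine ⟨?_, ?_, ?_, ?_, ?_, ?_, ?_, ?_⟩
  · exact fun B hB => hW.card B hB.1
  · intro B hB x hx y hy z hz h1 h2 h3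
    exact ⟨mem_univ _, mem_univ _, mem_univ _, F2 hW hU hR hB hx hy hz h1 h2 h3,
      Or.inl (mem_univ _)⟩
  · intro x y z h1 h2 h3 hs
    obtain ⟨B, hB, hx, hy, hz⟩ := hW.tri x y z h1 h2 h3
    refine ⟨B, ⟨hB, ?_⟩, hx, hy, hz⟩
    by_contra hn
    push Not at hn
    exact hs.2.2.2.1 ⟨hn x hx y hy, hn x hx z hz, hn y hy z hz⟩
  · intro x y z h1 h2 h3 B hB B' hB'
    exact hW.uniq x y z h1 h2 h3 B hB.1 B' hB'.1
  · intro x y h1 _ _ _ t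
    obtain ⟨n1, n2, n3⟩ := nx_spec i0 x t
    obtain ⟨B', hB', hx', hr', ht'⟩ := hW.tri x (ref i0 x) (nx x t) (ref_ne _ _) n1 n2
    have hF' : B' ∈ FD BW := by
      refine ⟨hB', ?_⟩
      by_contra hn
      push Not at hn
      exact n3 ⟨hn _ hx' _ hr', hn _ hx' _ ht', hn _ hr' _ ht'⟩
    obtain ⟨B, hB, hx, hy, hc⟩ := hW.col x y h1 B' hB' hx'
    refine ⟨B, ?_, hx, hy, fc_full hW hU hR i0 hF' hx' hr' ht' hc.symm⟩
    by_contra hn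
    obtain ⟨σ, h1, h2⟩ := notFD hW hU hR hB hn hx
    exact F3 hW hU hR hF' hx' hr' (ref_ne _ _) h1 (hc.symm.trans h2) (ref_near _ _)
  · intro x y h1 B hB B' hB' hx hy hx' hy' hc
    apply hW.colu x y h1 B hB.1 B' hB'.1 hx hy hx' hy'
    by_cases h : ∃ σ, used BU cU (p2 x) σ ∧ cW x B = κ σ <;>
    by_cases h' : ∃ σ, used BU cU (p2 x) σ ∧ cW x B' = κ σ
    · obtain ⟨σ, k1, k2⟩ := h
      obtain ⟨σ', k1', k2'⟩ := h'
      rw [fc_hole hκ i0 k1 k2, fc_hole hκ i0 k1' k2'] at hc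
      rw [k2, k2', Sum.inr.inj hc]
    · obtain ⟨σ, k1, k2⟩ := h
      obtain ⟨t, B1, hB1, m1, m2, m3, m4, m5⟩ := fc_ex hW hU hR i0 hB' hx' h'
      rw [fc_hole hκ i0 k1 k2, m5] at hc
      exact absurd hc Sum.inr_ne_inl
    · obtain ⟨σ, k1, k2⟩ := h'
      obtain ⟨t, B1, hB1, m1, m2, m3, m4, m5⟩ := fc_ex hW hU hR i0 hB hx h
      rw [fc_hole hκ i0 k1 k2, m5] at hc
      exact absurd hc Sum.inl_ne_inr
    · obtain ⟨t, B1, hB1, m1, m2, m3, m4, m5⟩ := fc_ex hW hU hR i0 hB hx h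
      obtain ⟨t', B1', hB1', m1', m2', m3', m4', m5'⟩ := fc_ex hW hU hR i0 hB' hx' h'
      rw [m5, m5'] at hc
      obtain rfl := Sum.inl.inj hc
      obtain ⟨n1, n2, n3⟩ := nx_spec i0 x t
      obtain rfl := hW.uniq _ _ _ (ref_ne i0 x) n1 n2 B1 hB1.1 B1' hB1'.1 m1 m2 m4 m1' m2' m4'
      rw [← m3, ← m3']
  · intro B hB x hx σ hσ
    by_cases h : ∃ σ, used BU cU (p2 x) σ ∧ cW x B = κ σ
    · obtain ⟨σ', k1, k2⟩ := h
      rw [fc_hole hκ i0 k1 k2] at hσ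
      obtain rfl := Sum.inr.inj hσ
      exact ⟨mem_univ _, k1, fun y hy hyx => F3 hW hU hR hB hx hy hyx.symm k1 k2⟩
    · obtain ⟨t, B1, hB1, m1, m2, m3, m4, m5⟩ := fc_ex hW hU hR i0 hB hx h
      rw [m5] at hσ
      exact absurd hσ Sum.inl_ne_inr
  · intro _ x y _ _ hN σ hσ
    have hxy : x ≠ y := by
      rintro rfl
      exact hN (Or.inr (Or.inr rfl))
    obtain ⟨a, ha, -⟩ := near_group (ref_ne i0 x) (ref_near i0 x)
    have hσ' := hσ
    obtain ⟨d, hd, hxd, rfl⟩ := hσ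
    have mx : x ∈ d.map (gl a) := by rw [← ha]; exact mem_map_of_mem _ hxd
    obtain ⟨B, hB, hx, hy, hc⟩ := hW.col x y hxy _ (hR d hd a).1 mx
    rw [(hR d hd a).2 x mx] at hc
    exact ⟨B, ⟨hB, x, hx, y, hy, hN⟩, hx, hy, fc_hole hκ i0 hσ' hc⟩

end flip

section base

abbrev P9 := Option (ZMod 3 × ZMod 3)

def bk (i : Fin 3 × ZMod 3 × ZMod 3) : Finset P9 :=
  if i.1 = 0 then {none, some (0, i.2.2), some (1, i.2.2 + i.2.1), some (2, i.2.2 + 2 * i.2.1)}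
  else if i.1 = 1 then {some (i.2.1 + 1, i.2.2 + 1), some (i.2.1 + 1, i.2.2 + 2),
    some (i.2.1 + 2, i.2.2 + 1), some (i.2.1 + 2, i.2.2 + 2)}
  else {some (i.2.1, i.2.2 + 1), some (i.2.1, i.2.2 + 2),
    some (i.2.1 + 1, i.2.2), some (i.2.1 + 2, i.2.2)}

def rb (x : P9) (s : ZMod 3) : Finset P9 :=
  match x with
  | none => {none, some (0, 0), some (1, s), some (2, 2 * s)}
  | some (a, g) => {none, some (a, g), some (a + 1, g + s), some (a + 2, g + 2 * s)}

def g3 (x : P9) (B : Finset P9) : ZMod 3 ⊕ Unit :=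
  if B = rb x 0 ∨ B ∩ rb x 0 = {x} then Sum.inl 0
  else if B = rb x 1 ∨ B ∩ rb x 1 = {x} then Sum.inl 1
  else if B = rb x 2 ∨ B ∩ rb x 2 = {x} then Sum.inl 2
  else Sum.inr ()

instance (x y : P9) : Decidable (Near x y) := by unfold Near; infer_instance
instance (b : Finset (Option (ZMod 3))) (x y z : P9) : Decidable (Scope b x y z) := by
  unfold Scope; infer_instance

lemma bk_card : ∀ i, (bk i).card = 4 := by decide +kernel
set_option synthInstance.maxHeartbeats 400000 in
set_option synthInstance.maxSize 1000 in
lemma bk_sc : ∀ i, ∀ x ∈ bk i, ∀ y ∈ bk i, ∀ z ∈ bk i, x ≠ y → x ≠ z → y ≠ z →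
  Scope univ x y z := by decide +kernel
set_option synthInstance.maxHeartbeats 400000 in
set_option synthInstance.maxSize 1000 in
lemma bk_tri : ∀ x y z : P9, x ≠ y → x ≠ z → y ≠ z → Scope univ x y z →
  ∃ i, x ∈ bk i ∧ y ∈ bk i ∧ z ∈ bk i := by decide +kernel
lemma bk_un : ∀ i j, i = j ∨ (bk i ∩ bk j).card ≤ 2 := by decide +kernel
lemma bk_full : ∀ x y : P9, x ≠ y → ∀ t, ∃ i, x ∈ bk i ∧ y ∈ bk i ∧ g3 x (bk i) = Sum.inl t := by
  decide +kernel
lemma bk_colu : ∀ i j, ∀ x ∈ bk i, x ∈ bk j → g3 x (bk i) = g3 x (bk j) → i = j ∨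
  (bk i ∩ bk j).card ≤ 1 := by decide +kernel
lemma bk_h1 : ∀ i, ∀ x ∈ bk i, g3 x (bk i) = Sum.inr () → ∀ y ∈ bk i, y ≠ x → ¬ Near x y := by
  decide +kernel
lemma bk_h2 : ∀ x y : P9, ¬ Near x y → ∃ i, x ∈ bk i ∧ y ∈ bk i ∧ g3 x (bk i) = Sum.inr () := by
  decide +kernel
lemma bk_rows : ∀ g : ZMod 3, (univ : Finset (Option (ZMod 3))).map (rl g) = bk (0, 0, g) ∧
    ∀ x ∈ bk (0, 0, g), g3 x (bk (0, 0, g)) = Sum.inl 0 := by decide +kernel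
end base

def U3 : Set (Finset (Option (ZMod 3))) := {univ}
def u3c (_ : Option (ZMod 3)) (_ : Finset (Option (ZMod 3))) : Unit := ()

lemma U3_RD : IsRD U3 u3c where
  card := by
    rintro b rfl
    decide
  tri x y z _ _ _ := ⟨univ, rfl, mem_univ _, mem_univ _, mem_univ _⟩
  uniq := by
    rintro x y z _ _ _ b rfl b' rfl _ _ _ _ _ _
    rfl
  col x y _ b _ _ := ⟨univ, rfl, mem_univ _, mem_univ _, rfl⟩
  colu := by
    rintro x y _ b rfl b' rfl _ _ _ _ _
    rfl

lemma base_ing : IsIng (univ : Finset (Option (ZMod 3))) (Set.range bk) g3 (used U3 u3c) where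
  card := by
    rintro _ ⟨i, rfl⟩
    exact bk_card i
  sc := by
    rintro _ ⟨i, rfl⟩
    exact bk_sc i
  tri x y z h1 h2 h3 h := by
    obtain ⟨i, hi⟩ := bk_tri x y z h1 h2 h3 h
    exact ⟨_, ⟨i, rfl⟩, hi⟩
  uniq := by
    rintro x y z h1 h2 h3 _ ⟨i, rfl⟩ _ ⟨j, rfl⟩ a1 a2 a3 b1 b2 b3
    rcases bk_un i j with rfl | h
    · rfl
    · exfalso
      have : ({x, y, z} : Finset P9) ⊆ bk i ∩ bk j := by
        intro w hw
        simp only [Finset.mem_insert, Finset.mem_singleton] at hw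
        rcases hw with rfl | rfl | rfl <;> simp [*]
      have := Finset.card_le_card this
      rw [Finset.card_eq_three.mpr ⟨x, y, z, h1, h2, h3, rfl⟩] at this
      omega
  full x y h _ _ _ t := by
    obtain ⟨i, hi⟩ := bk_full x y h t
    exact ⟨_, ⟨i, rfl⟩, hi⟩
  colu := by
    rintro x y h1 _ ⟨i, rfl⟩ _ ⟨j, rfl⟩ a1 a2 b1 b2 hc
    rcases bk_colu i j x a1 b1 hc with rfl | h
    · rfl
    · exfalso
      have : ({x, y} : Finset P9) ⊆ bk i ∩ bk j := by
        intro w hw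
        simp only [Finset.mem_insert, Finset.mem_singleton] at hw
        rcases hw with rfl | rfl <;> simp [*]
      have := Finset.card_le_card this
      rw [Finset.card_pair h1] at this
      omega
  hole1 := by
    rintro _ ⟨i, rfl⟩ x hx σ hc
    exact ⟨mem_univ _, ⟨univ, rfl, mem_univ _, rfl⟩, bk_h1 i x hx hc⟩
  hole2 := by
    rintro _ x y _ _ hN σ _
    obtain ⟨i, hi⟩ := bk_h2 x y hN
    exact ⟨_, ⟨i, rfl⟩, hi⟩

lemma base_rows : Rows (univ : Finset (Option (ZMod 3))) (Set.range bk) g3 := by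
  intro g
  obtain ⟨h1, h2⟩ := bk_rows g
  rw [h1]
  exact ⟨⟨_, rfl⟩, h2⟩

lemma choose_ing {A G ΓV ΓU : Type} [CommRing G] {BV : Set (Finset (Option A))}
    {cV : Option A → Finset (Option A) → ΓV} (hV : IsRD BV cV) {us : Option G → ΓU → Prop}
    {hf : G} (hhf : 2 * hf = 1) {D0 : Set (Finset (Option (ZMod 3 × G)))}
    {γ0 : Option (ZMod 3 × G) → Finset (Option (ZMod 3 × G)) → G ⊕ ΓU}
    (h0 : IsIng univ D0 γ0 us) :
    ∃ (D : Finset (Option A) → Set (Finset (Option (A × G))))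
      (γ : Finset (Option A) → Option (A × G) → Finset (Option (A × G)) → G ⊕ ΓU),
      ∀ b ∈ BV, IsIng b (D b) (γ b) us ∧ (Rows univ D0 γ0 → Rows b (D b) (γ b)) := by
  have : ∀ b : Finset (Option A), ∃ (D : Set (Finset (Option (A × G)))) 
      (γ : Option (A × G) → Finset (Option (A × G)) → G ⊕ ΓU),
      b ∈ BV → IsIng b D γ us ∧ (Rows univ D0 γ0 → Rows b D γ) := by
    intro b
    by_cases hb : b ∈ BV
    · have hc := hV.card b hb
      by_cases hn : none ∈ b
      · obtain ⟨e, rfl⟩ := ex_emb3 b hc hn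
        exact ⟨_, _, fun _ => ⟨h0.transport e, fun h => h.transport e⟩⟩
      · obtain ⟨e, rfl⟩ := ex_emb4 b hc hn
        exact ⟨_, _, fun _ => ⟨(td_ing hf hhf us).transport e, fun h => td_rows.transport e⟩⟩
    · exact ⟨∅, fun _ _ => Sum.inl 0, fun h => absurd h hb⟩
  choose D γ h using this
  exact ⟨D, γ, h⟩

lemma IsRD.map {α β Γ : Type} (e : α ≃ β) {B : Set (Finset α)} {c : α → Finset α → Γ}
    (h : IsRD B c) : IsRD {b : Finset β | b.map e.symm.toEmbedding ∈ B}
      (fun x b => c (e.symm x) (b.map e.symm.toEmbedding)) where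
  card b hb := by rw [← h.card _ hb, Finset.card_map]
  tri x y z h1 h2 h3 := by
    obtain ⟨b, hb, a1, a2, a3⟩ := h.tri (e.symm x) (e.symm y) (e.symm z) (by simpa) (by simpa)
      (by simpa)
    refine ⟨b.map e.toEmbedding, ?_, ?_, ?_, ?_⟩
    · simpa [Finset.map_map] using hb
    all_goals simpa [Finset.mem_map_equiv]
  uniq x y z h1 h2 h3 b hb b' hb' a1 a2 a3 b1 b2 b3 := by
    refine Finset.map_injective e.symm.toEmbedding (h.uniq (e.symm x) (e.symm y) (e.symm z)
      (by simpa) (by simpa) (by simpa) _ hb _ hb' ?_ ?_ ?_ ?_ ?_ ?_) <;>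
    simpa [Finset.mem_map_equiv]
  col x y h1 b hb hx := by
    obtain ⟨b', hb', a1, a2, a3⟩ := h.col (e.symm x) (e.symm y) (by simpa) _ hb
      (by simpa [Finset.mem_map_equiv])
    refine ⟨b'.map e.toEmbedding, ?_, ?_, ?_, ?_⟩
    · simpa [Finset.map_map] using hb'
    · simpa [Finset.mem_map_equiv]
    · simpa [Finset.mem_map_equiv]
    · simpa [Finset.map_map] using a3
  colu x y h1 b hb b' hb' a1 a2 b1 b2 hc := by
    refine Finset.map_injective e.symm.toEmbedding (h.colu (e.symm x) (e.symm y)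
      (by simpa) _ hb _ hb' ?_ ?_ ?_ ?_ hc) <;>
    simpa [Finset.mem_map_equiv]

def sw (I J : Type) : Option (I × J) ≃ Option (J × I) := Equiv.optionCongr (Equiv.prodComm I J)

lemma exists_cqs {G ΓU : Type} {BU : Set (Finset (Option G))}
    {cU : Option G → Finset (Option G) → ΓU} (hU : IsRD BU cU) (i0 : G) :
    ∃ D γ, IsIng (univ : Finset (Option (ZMod 3))) D γ (used BU cU) := by
  obtain ⟨D, γ, hD⟩ := choose_ing hU (G := ZMod 3) (hf := 2) (by decide) base_ing
  have hI : ∀ b ∈ BU, IsIng b (D b) (γ b) (used U3 u3c) := fun b hb => (hD b hb).1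
  have hW := (prod_RD hU U3_RD hI).map (sw G (ZMod 3))
  have key : ∀ (d : Finset (Option G)) (r : ZMod 3),
      (d.map (gl r)).map (sw G (ZMod 3)).symm.toEmbedding = d.map (rl r) := by
    intro d r
    rw [Finset.map_map]
    congr 1
    ext x : 1
    cases x <;> rfl
  have k2 : ∀ x : Option (ZMod 3 × G), pr ((sw G (ZMod 3)).symm x) = p2 x := by
    intro x
    cases x <;> rfl
  refine ⟨_, _, flip_ing (κ := fun σ => Sum.inl (σ, 0)) hW hU ?_ ?_ i0⟩
  · intro d hd r
    obtain ⟨r1, r2⟩ := (hD d hd).2 base_rows r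
    constructor
    · show _ ∈ PB _ _ _
      rw [key]
      exact Or.inl ⟨d, hd, r1⟩
    · intro x hx
      show pc _ _ _ _ _ _ _ = _
      rw [key, pc_inl hU hI hd r1 (r2 _ ?_), k2]
      rw [← key]
      exact mem_map_of_mem _ hx
  · intro a b h
    simpa using h

theorem prod_exists {A G ΓV ΓU : Type} [CommRing G] {hf : G} (hhf : 2 * hf = 1)
    {BV : Set (Finset (Option A))} {cV : Option A → Finset (Option A) → ΓV} (hV : IsRD BV cV)
    {BU : Set (Finset (Option G))} {cU : Option G → Finset (Option G) → ΓU} (hU : IsRD BU cU) :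
    ∃ (Γ : Type) (B : Set (Finset (Option (A × G)))) (c : Option (A × G) → Finset (Option (A × G)) → Γ), IsRD B c := by
  obtain ⟨D0, γ0, h0⟩ := exists_cqs hU 0
  obtain ⟨D, γ, hD⟩ := choose_ing hV hhf h0
  exact ⟨_, _, _, prod_RD hV hU (fun b hb => (hD b hb).1)⟩

lemma odd_of_RD {I Γ : Type} [Fintype I] [Nonempty I] {B : Set (Finset (Option I))}
    {c : Option I → Finset (Option I) → Γ} (h : IsRD B c) : Odd (Fintype.card I) := by
  classical
  obtain ⟨i0⟩ := ‹Nonempty I›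
  have hq : ∀ z : Option I, z ≠ none → z ≠ some i0 → ∃ w b, b ∈ B ∧ none ∈ b ∧ some i0 ∈ b ∧ z ∈ b ∧
      w ∈ b ∧ w ≠ none ∧ w ≠ some i0 ∧ w ≠ z ∧ ∀ t ∈ b, t = none ∨ t = some i0 ∨ t = z ∨ t = w := by
    intro z h1 h2
    obtain ⟨b, hb, a1, a2, a3⟩ := h.tri none (some i0) z (by simp) h1.symm h2.symm
    have hc : (((b.erase none).erase (some i0)).erase z).card = 1 := by
      rw [card_erase_of_mem (by simp [*]), card_erase_of_mem (by simp [*]),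
        card_erase_of_mem (by simp [*]), h.card b hb]
    obtain ⟨w, hw⟩ := Finset.card_eq_one.mp hc
    have hw' : ∀ t, (t ≠ z ∧ t ≠ some i0 ∧ t ≠ none ∧ t ∈ b) ↔ t = w := by
      intro t
      have : t ∈ ((b.erase none).erase (some i0)).erase z ↔ t = w := by rw [hw]; simp
      rw [← this]
      simp only [mem_erase]
    obtain ⟨b1, b2, b3, b4⟩ := (hw' w).2 rfl
    refine ⟨w, b, hb, a1, a2, a3, b4, b3, b2, b1, fun t ht => ?_⟩
    have := (hw' t).1
    tauto
  choose! f bl hb n1 n2 n3 n4 n5 n6 n7 n8 using hq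
  have hs : ∑ _z ∈ ((univ : Finset (Option I)).erase none).erase (some i0), (1 : ZMod 2) = 0 := by
    apply Finset.sum_involution (fun z _ => f z)
    · intros
      decide
    · intro z hz _
      simp only [mem_erase, mem_univ, and_true] at hz
      exact n7 z hz.2 hz.1
    · intro z hz
      simp only [mem_erase, mem_univ, and_true] at hz ⊢
      exact ⟨n6 z hz.2 hz.1, n5 z hz.2 hz.1⟩
    · intro z hz
      simp only [mem_erase, mem_univ, and_true] at hz
      obtain ⟨z2, z1⟩ := hz
      have w1 := n5 z z1 z2
      have w2 := n6 z z1 z2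
      have hbb : bl (f z) = bl z := h.uniq none (some i0) (f z) (by simp) w1.symm w2.symm _
        (hb _ w1 w2) _ (hb z z1 z2) (n1 _ w1 w2) (n2 _ w1 w2) (n3 _ w1 w2) (n1 z z1 z2)
        (n2 z z1 z2) (n4 z z1 z2)
      have := n8 (f z) w1 w2 z (by rw [hbb]; exact n3 z z1 z2)
      rcases this with h' | h' | h' | h'
      · exact absurd h' z1
      · exact absurd h' z2
      · exact absurd h'.symm (n7 z z1 z2)
      · exact h'.symm
  rw [Finset.sum_const, nsmul_eq_mul, mul_one, ZMod.natCast_eq_zero_iff_even,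
    card_erase_of_mem (by simp), card_erase_of_mem (by simp), card_univ, Fintype.card_option] at hs
  have : 0 < Fintype.card I := Fintype.card_pos_iff.mpr ⟨i0⟩
  obtain ⟨k, hk⟩ := hs
  exact ⟨k, by omega⟩

lemma res_col {Y : Finset ℕ} {B : Finset (Finset ℕ)} (h : Resolvable Y B) :
    ∃ col : Finset ℕ → ℕ, (∀ b ∈ B, ∀ y ∈ Y, ∃ b' ∈ B, y ∈ b' ∧ col b' = col b) ∧
      (∀ b ∈ B, ∀ b' ∈ B, ∀ y ∈ Y, y ∈ b → y ∈ b' → col b = col b' → b = b') := by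
  classical
  obtain ⟨r, P, hP, hPB, hu⟩ := h
  choose ix hix hiu using hu
  refine ⟨fun b => if h : b ∈ B then (ix b h).val else 0, ?_, ?_⟩
  · intro b hb y hy
    obtain ⟨b', ⟨h1, h2⟩, -⟩ := (hP (ix b hb)).2 y hy
    refine ⟨b', hPB _ h1, h2, ?_⟩
    have hb' := hPB _ h1
    simp only [hb, hb', dif_pos]
    rw [hiu b' hb' _ h1]
  · intro b hb b' hb' y hy h1 h2 hc
    simp only [hb, hb', dif_pos] at hc
    have hc := Fin.ext hc
    have := hix b hb
    have h' := hix b' hb'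
    rw [← hc] at h'
    exact ((hP (ix b hb)).2 y hy).unique ⟨this, h1⟩ ⟨h', h2⟩

lemma col_res {Y : Finset ℕ} {B : Finset (Finset ℕ)} {Γ : Type} (hs : ∀ b ∈ B, b ⊆ Y)
    (col : Finset ℕ → Γ) (h1 : ∀ b ∈ B, ∀ y ∈ Y, ∃ b' ∈ B, y ∈ b' ∧ col b' = col b)
    (h2 : ∀ b ∈ B, ∀ b' ∈ B, ∀ y ∈ Y, y ∈ b → y ∈ b' → col b = col b' → b = b') :
    Resolvable Y B := by
  classical
  let e := (B.image col).equivFin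
  refine ⟨(B.image col).card, fun i => B.filter (fun b => col b = (e.symm i).1), ?_, ?_, ?_⟩
  · intro i
    refine ⟨fun b hb => hs b (mem_filter.mp hb).1, fun y hy => ?_⟩
    obtain ⟨b, hb, hbc⟩ := Finset.mem_image.mp (e.symm i).2
    obtain ⟨b', hb', hy', hc'⟩ := h1 b hb y hy
    refine ⟨b', ⟨mem_filter.mpr ⟨hb', by rw [hc', hbc]⟩, hy'⟩, ?_⟩
    rintro b'' ⟨h3, h4⟩
    obtain ⟨h5, h6⟩ := mem_filter.mp h3
    exact h2 _ h5 _ hb' y hy h4 hy' (by rw [h6, hc', hbc])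
  · intro i
    exact filter_subset _ _
  · intro b hb
    refine ⟨e ⟨col b, mem_image_of_mem _ hb⟩, ?_, ?_⟩
    · simp [hb]
    · intro i hi
      have := (mem_filter.mp hi).2
      rw [← Equiv.symm_apply_eq]
      exact Subtype.ext this.symm

lemma to_RD {n : ℕ} (h : ExistsRDSQS n) (α : Type) [Fintype α] (hα : Fintype.card α = n) :
    ∃ (B : Set (Finset α)) (c : α → Finset α → ℕ), IsRD B c := by
  classical
  obtain ⟨X, B, ⟨hX, hB, hT⟩, hR⟩ := h
  let e : α ≃ X := Fintype.equivOfCardEq (by simp [hα, hX])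
  let f : α ↪ ℕ := ⟨fun a => (e a).1, fun a b h => e.injective (Subtype.ext h)⟩
  have hfX : ∀ a, f a ∈ X := fun a => (e a).2
  have hsur : ∀ b ⊆ X, ∃ b0 : Finset α, b0.map f = b := by
    intro b hb
    refine ⟨univ.filter (fun a => f a ∈ b), ?_⟩
    ext y
    simp only [mem_map, mem_filter, mem_univ, true_and]
    constructor
    · rintro ⟨a, ha, rfl⟩
      exact ha
    · intro hy
      have hfe : f (e.symm ⟨y, hb hy⟩) = y := by
        show (e (e.symm ⟨y, hb hy⟩)).1 = y
        rw [Equiv.apply_symm_apply]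
      exact ⟨e.symm ⟨y, hb hy⟩, by rw [hfe]; exact hy, hfe⟩
  choose! col hc1 hc2 using fun x hx => res_col (hR x hx)
  have hd : ∀ x (b : Finset α), b.map f ∈ B → x ∈ b → (b.map f).erase (f x) ∈ derivedBlocks B (f x) := by
    intro x b hb hx
    exact mem_image.mpr ⟨b.map f, mem_filter.mpr ⟨hb, mem_map_of_mem f hx⟩, rfl⟩
  have hy : ∀ x y : α, x ≠ y → f y ∈ X.erase (f x) := fun x y hxy =>
    mem_erase.mpr ⟨fun h => hxy (f.injective h).symm, hfX y⟩
  have hm : ∀ (x y : α) (b : Finset α), x ≠ y → y ∈ b → f y ∈ (b.map f).erase (f x) := fun x y b hxy hb =>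
    mem_erase.mpr ⟨fun h => hxy (f.injective h).symm, mem_map_of_mem f hb⟩
  have h3 : ∀ x y z : α, x ≠ y → x ≠ z → y ≠ z → ∃! b, b ∈ B ∧ ({x, y, z} : Finset α).map f ⊆ b := by
    intro x y z h1 h2 h3
    refine hT _ ?_ ?_
    · intro t ht
      obtain ⟨a, _, rfl⟩ := mem_map.mp ht
      exact hfX a
    · rw [card_map]
      exact Finset.card_eq_three.mpr ⟨x, y, z, h1, h2, h3, rfl⟩
  have hsub : ∀ (x y z : α) (b : Finset α), ({x, y, z} : Finset α).map f ⊆ b.map f ↔ x ∈ b ∧ y ∈ b ∧ z ∈ b := by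
    intro x y z b
    rw [Finset.map_subset_map]
    simp [Finset.insert_subset_iff]
  refine ⟨{b | b.map f ∈ B}, fun x b => col (f x) ((b.map f).erase (f x)), ?_, ?_, ?_, ?_, ?_⟩
  · intro b hb
    rw [← (hB _ hb).2, card_map]
  · intro x y z h1 h2 h4
    obtain ⟨b, ⟨hb, hs⟩, -⟩ := h3 x y z h1 h2 h4
    obtain ⟨b0, rfl⟩ := hsur b (hB b hb).1
    exact ⟨b0, hb, (hsub _ _ _ _).1 hs⟩
  · intro x y z h1 h2 h4 b hb b' hb' a1 a2 a3 b1 b2 b3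
    exact Finset.map_injective f ((h3 x y z h1 h2 h4).unique ⟨hb, (hsub _ _ _ _).2 ⟨a1, a2, a3⟩⟩
      ⟨hb', (hsub _ _ _ _).2 ⟨b1, b2, b3⟩⟩)
  · intro x y hxy b hb hx
    obtain ⟨b', hb', h1, h2⟩ := hc1 (f x) (hfX x) _ (hd x b hb hx) (f y) (hy x y hxy)
    obtain ⟨b1, hb1, rfl⟩ := mem_image.mp hb'
    obtain ⟨hb1, hx1⟩ := mem_filter.mp hb1
    obtain ⟨b0, rfl⟩ := hsur b1 (hB b1 hb1).1
    refine ⟨b0, hb1, by simpa using hx1, ?_, h2⟩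
    simpa using (mem_erase.mp h1).2
  · intro x y hxy b hb b' hb' a1 a2 b1 b2 hc
    have := hc2 (f x) (hfX x) _ (hd x b hb a1) _ (hd x b' hb' b1) (f y) (hy x y hxy) (hm _ _ _ hxy a2)
      (hm _ _ _ hxy b2) hc
    have h' : b.map f = b'.map f := by
      rw [← insert_erase (mem_map_of_mem f a1), this, insert_erase (mem_map_of_mem f b1)]
    exact Finset.map_injective f h'

lemma of_RD {α Γ : Type} [Fintype α] {B : Set (Finset α)} {c : α → Finset α → Γ} (h : IsRD B c) :
    ExistsRDSQS (Fintype.card α) := by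
  classical
  let e := Fintype.equivFin α
  let f : α ↪ ℕ := ⟨fun a => (e a).1, fun a b h => e.injective (Fin.ext h)⟩
  let BB : Finset (Finset ℕ) := (univ.filter (fun b : Finset α => b ∈ B)).image (fun b => b.map f)
  have hBB : ∀ b, b ∈ BB ↔ ∃ b0 ∈ B, b0.map f = b := by
    intro b
    simp [BB]
  have hX : ∀ y, y ∈ (univ : Finset α).map f ↔ ∃ a, f a = y := by
    intro y
    simp
  have hder : ∀ x b, b ∈ derivedBlocks BB (f x) ↔ ∃ b0 ∈ B, x ∈ b0 ∧ b = (b0.map f).erase (f x) := by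
    intro x b
    unfold derivedBlocks
    simp only [mem_image, mem_filter, hBB]
    constructor
    · rintro ⟨_, ⟨⟨b0, hb0, rfl⟩, hx⟩, rfl⟩
      exact ⟨b0, hb0, by simpa using hx, rfl⟩
    · rintro ⟨b0, hb0, hx, rfl⟩
      exact ⟨_, ⟨⟨b0, hb0, rfl⟩, by simpa using hx⟩, rfl⟩
  refine ⟨univ.map f, BB, ⟨by simp, ?_, ?_⟩, ?_⟩
  · intro b hb
    obtain ⟨b0, hb0, rfl⟩ := (hBB b).1 hb
    exact ⟨map_subset_map.mpr (subset_univ _), by rw [card_map, h.card b0 hb0]⟩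
  · intro T hT hc
    obtain ⟨x', y', z', h1, h2, h3, rfl⟩ := Finset.card_eq_three.mp hc
    obtain ⟨x, rfl⟩ := (hX x').1 (hT (by simp))
    obtain ⟨y, rfl⟩ := (hX y').1 (hT (by simp))
    obtain ⟨z, rfl⟩ := (hX z').1 (hT (by simp))
    have h1' := fun hh => h1 (congrArg f hh)
    have h2' := fun hh => h2 (congrArg f hh)
    have h3' := fun hh => h3 (congrArg f hh)
    obtain ⟨b, hb, a1, a2, a3⟩ := h.tri x y z h1' h2' h3'
    refine ⟨b.map f, ⟨(hBB _).2 ⟨b, hb, rfl⟩, by simp [Finset.insert_subset_iff, *]⟩, ?_⟩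
    rintro b' ⟨hb', hs⟩
    obtain ⟨b0, hb0, rfl⟩ := (hBB _).1 hb'
    simp only [Finset.insert_subset_iff, singleton_subset_iff, mem_map' f] at hs
    rw [h.uniq x y z h1' h2' h3' b hb b0 hb0 a1 a2 a3 hs.1 hs.2.1 hs.2.2]
  · intro x' hx'
    obtain ⟨x, rfl⟩ := (hX x').1 hx'
    have rec0 : ∀ b0 : Finset α, x ∈ b0 →
        ((insert (f x) ((b0.map f).erase (f x))).preimage f f.injective.injOn) = b0 := by
      intro b0 hx0
      rw [insert_erase (mem_map_of_mem f hx0), preimage_map]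
    have hyy : ∀ y, f y ∈ ((univ : Finset α).map f).erase (f x) → x ≠ y := by
      rintro y hy rfl
      simp at hy
    refine col_res ?_ (fun b => c x ((insert (f x) b).preimage f f.injective.injOn)) ?_ ?_
    · intro b hb
      obtain ⟨b0, hb0, hx0, rfl⟩ := (hder x b).1 hb
      exact erase_subset_erase _ (map_subset_map.mpr (subset_univ _))
    · intro b hb y' hy'
      obtain ⟨b0, hb0, hx0, rfl⟩ := (hder x b).1 hb
      obtain ⟨y, rfl⟩ := (hX y').1 (mem_erase.mp hy').2
      have hxy := hyy y hy'
      obtain ⟨b1, hb1, a1, a2, a3⟩ := h.col x y hxy b0 hb0 hx0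
      refine ⟨(b1.map f).erase (f x), (hder _ _).2 ⟨b1, hb1, a1, rfl⟩, ?_, ?_⟩
      · exact mem_erase.mpr ⟨(mem_erase.mp hy').1, mem_map_of_mem f a2⟩
      · simp only [rec0 b1 a1, rec0 b0 hx0, a3]
    · intro b hb b' hb' y' hy' m1 m2 hc
      obtain ⟨b0, hb0, hx0, rfl⟩ := (hder x b).1 hb
      obtain ⟨b1, hb1, hx1, rfl⟩ := (hder x b').1 hb'
      obtain ⟨y, rfl⟩ := (hX y').1 (mem_erase.mp hy').2
      have hxy := hyy y hy'
      simp only [rec0 b1 hx1, rec0 b0 hx0] at hc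
      rw [h.colu x y hxy b0 hb0 b1 hb1 hx0 ((mem_map' f).1 (mem_erase.mp m1).2) hx1
        ((mem_map' f).1 (mem_erase.mp m2).2) hc]

end RDP

/-- If there exist an RDSQS(u + 1) and an RDSQS(v + 1), then there exists an
RDSQS(uv + 1). -/
theorem stmt_15 (u v : ℕ) (hu : 0 < u) (hv : 0 < v)
    (h1 : ExistsRDSQS (u + 1)) (h2 : ExistsRDSQS (v + 1)) :
    ExistsRDSQS (u * v + 1) := by
  haveI : NeZero u := ⟨hu.ne'⟩
  haveI : NeZero v := ⟨hv.ne'⟩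
  obtain ⟨BU, cU, hU⟩ := RDP.to_RD h1 (Option (ZMod u)) (by simp [ZMod.card])
  obtain ⟨BV, cV, hV⟩ := RDP.to_RD h2 (Option (ZMod v)) (by simp [ZMod.card])
  have hodd := RDP.odd_of_RD hU
  rw [ZMod.card] at hodd
  obtain ⟨k, hk⟩ := hodd
  have hhf : (2 : ZMod u) * ((k + 1 : ℕ) : ZMod u) = 1 := by
    have : ((2 * k + 1 : ℕ) : ZMod u) = 0 := by rw [← hk]; simp
    push_cast at this ⊢
    linear_combination this
  obtain ⟨Γ, B, c, h⟩ := RDP.prod_exists hhf hV hU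
  have := RDP.of_RD h
  rwa [Fintype.card_option, Fintype.card_prod, ZMod.card, ZMod.card, mul_comm] at this
end
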